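/- Fix integers m ≥ 1 and n ≥ 1 and a permutation σ ∈ S_n of cycle type λ = (λ_1,…,λ_ℓ). The number of labelled m-Tamari intervals of size n that are fixed under the action of σ equals (mn+1)^{ℓ−2} · ∏_{i=1}^{ℓ} binom((m+1)λ_i, λ_i), the equality being understood in ℚ (the exponent ℓ−2 may be negative). -/

import Mathlib

/-- A step of a lattice path: north or east. -/
inductive Step : Type
  | N : Step
  | E : Step
deriving DecidableEq

/-- Number of north steps of a path. -/
def northCount (w : List Step) : ℕ := (w.filter (fun s => s = Step.N)).length

/-- Number of east steps of a path. -/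
def eastCount (w : List Step) : ℕ := (w.filter (fun s => s = Step.E)).length

/-- `w` is an `m`-ballot path: it never goes below the line `x = m y`, and ends on it. -/
def IsBallot (m : ℕ) (w : List Step) : Prop :=
  (∀ k, eastCount (w.take k) ≤ m * northCount (w.take k)) ∧
    eastCount w = m * northCount w

/-- The covering relation of the `m`-Tamari order: `Q` covers `P` when `P` contains an
east step immediately followed by a north step `b`, and `Q` is obtained from `P` by
swapping the east step and `S`, where `S` is the shortest factor of `P` beginning with
`b` that is a (translated) `m`-ballot path. -/
def TamariCovers (m : ℕ) (P Q : List Step) : Prop :=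
  ∃ w₁ S w₂ : List Step,
    S ≠ [] ∧ S.head? = some Step.N ∧ IsBallot m S ∧
    (∀ k, 0 < k → k < S.length → ¬ IsBallot m (S.take k)) ∧
    P = w₁ ++ Step.E :: (S ++ w₂) ∧ Q = w₁ ++ S ++ Step.E :: w₂

/-- The `m`-Tamari order (reflexive–transitive closure of the covering relation). -/
def TamariLE (m : ℕ) : List Step → List Step → Prop :=
  Relation.ReflTransGen (TamariCovers m)

/-- `lab` is a labelling of the `n` north steps of `Q` by `1, …, n` (here, bijectively by
`Fin n`), increasing along each ascent: `lab i` is the position in `Q` of the north step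
labelled `i`. -/
def IsLabelling (n : ℕ) (Q : List Step) (lab : Fin n → ℕ) : Prop :=
  Function.Injective lab ∧ (∀ i, Q[lab i]? = some Step.N) ∧
    (∀ i j : Fin n, lab j = lab i + 1 → i < j)

/-- A labelled `m`-Tamari interval of size `n`: a pair of `m`-ballot paths of size `n`
with `P ≤ Q` in the `m`-Tamari order, together with a labelling of `Q`. -/
def IsLabelledTamariInterval (m n : ℕ)
    (x : (List Step × List Step) × (Fin n → ℕ)) : Prop :=
  IsBallot m x.1.1 ∧ northCount x.1.1 = n ∧
    IsBallot m x.1.2 ∧ northCount x.1.2 = n ∧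
    TamariLE m x.1.1 x.1.2 ∧ IsLabelling n x.1.2 x.2

/-- The cycles of a permutation, as the quotient by the `SameCycle` relation. -/
def Cycles {n : ℕ} (σ : Equiv.Perm (Fin n)) : Type :=
  Quotient (Equiv.Perm.SameCycle.setoid σ)

/-- The number of cycles of a permutation (fixed points count as cycles). -/
noncomputable def numCycles {n : ℕ} (σ : Equiv.Perm (Fin n)) : ℕ :=
  Nat.card (Cycles σ)

/-- The length of a cycle of a permutation. -/
noncomputable def cycleLen {n : ℕ} (σ : Equiv.Perm (Fin n)) (c : Cycles σ) : ℕ :=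
  Nat.card {i : Fin n // Quotient.mk (Equiv.Perm.SameCycle.setoid σ) i = c}

/-- Positions `a` and `b` belong to the same ascent (maximal run of north steps) of `Q`. -/
def SameAscent (Q : List Step) (a b : ℕ) : Prop :=
  ∀ r, min a b ≤ r → r ≤ max a b → Q[r]? = some Step.N

/-- A labelled interval is fixed by `σ` exactly when every cycle of `σ` is contained in
the label set of a single ascent of the upper path. -/
def FixedBy {n : ℕ} (x : (List Step × List Step) × (Fin n → ℕ))
    (σ : Equiv.Perm (Fin n)) : Prop :=
  ∀ i j : Fin n, σ.SameCycle i j → SameAscent x.1.2 (x.2 i) (x.2 j)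

namespace TI
open Step

/-- `Run m h w k`: the word `w` goes from height `h` to height `k`, never negative. -/
def Run (m : ℕ) : ℕ → List Step → ℕ → Prop
  | h, [], k => h = k
  | h, N :: w, k => Run m (h + m) w k
  | h, E :: w, k => ∃ h', h = h' + 1 ∧ Run m h' w k

theorem run_nil {m h k : ℕ} : Run m h [] k ↔ h = k := Iff.rfl
theorem run_N {m h k : ℕ} {w : List Step} : Run m h (N :: w) k ↔ Run m (h + m) w k := Iff.rfl
theorem run_E {m h k : ℕ} {w : List Step} :
    Run m h (E :: w) k ↔ ∃ h', h = h' + 1 ∧ Run m h' w k := Iff.rfl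
theorem run_E_succ {m h k : ℕ} {w : List Step} : Run m (h + 1) (E :: w) k ↔ Run m h w k := by
  rw [run_E]; constructor
  · rintro ⟨h', e, r⟩
    obtain rfl : h = h' := by omega
    exact r
  · exact fun r => ⟨h, rfl, r⟩

theorem run_append {m : ℕ} (A B : List Step) {h k : ℕ} :
    Run m h (A ++ B) k ↔ ∃ j, Run m h A j ∧ Run m j B k := by
  induction A generalizing h with
  | nil => simp [run_nil]
  | cons s A ih =>
    cases s with
    | N => simp only [List.cons_append, run_N, ih]
    | E =>
      simp only [List.cons_append, run_E, ih]
      constructor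
      · rintro ⟨h', e, j, r1, r2⟩; exact ⟨j, ⟨h', e, r1⟩, r2⟩
      · rintro ⟨j, ⟨h', e, r1⟩, r2⟩; exact ⟨h', e, j, r1, r2⟩

theorem northCount_nil : northCount [] = 0 := rfl
theorem northCount_N (w : List Step) : northCount (N :: w) = northCount w + 1 := by
  simp [northCount]
theorem northCount_E (w : List Step) : northCount (E :: w) = northCount w := by
  simp [northCount]
theorem eastCount_nil : eastCount [] = 0 := rfl
theorem eastCount_N (w : List Step) : eastCount (N :: w) = eastCount w := by
  simp [eastCount]
theorem eastCount_E (w : List Step) : eastCount (E :: w) = eastCount w + 1 := by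
  simp [eastCount]
theorem northCount_append (A B : List Step) : northCount (A ++ B) = northCount A + northCount B := by
  simp [northCount]
theorem eastCount_append (A B : List Step) : eastCount (A ++ B) = eastCount A + eastCount B := by
  simp [eastCount]
theorem length_eq_counts (w : List Step) : w.length = northCount w + eastCount w := by
  induction w with
  | nil => rfl
  | cons s w ih => cases s <;> simp [northCount_N, northCount_E, eastCount_N, eastCount_E, ih] <;> omega

theorem run_net {m : ℕ} {w : List Step} {h k : ℕ} (r : Run m h w k) :
    h + m * northCount w = k + eastCount w := by
  induction w generalizing h with
  | nil => rw [run_nil] at r; simp [r, northCount_nil, eastCount_nil]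
  | cons s w ih =>
    cases s with
    | N => have := ih (run_N.1 r); rw [northCount_N, eastCount_N]; linarith [mul_add m (northCount w) 1]
    | E =>
      replace r := run_E.1 r; obtain ⟨h', rfl, r⟩ := r
      have := ih r; rw [northCount_E, eastCount_E]; linarith

theorem run_shift {m : ℕ} {w : List Step} {h k : ℕ} (d : ℕ) (r : Run m h w k) :
    Run m (h + d) w (k + d) := by
  induction w generalizing h with
  | nil => rw [run_nil] at *; omega
  | cons s w ih =>
    cases s with
    | N => rw [run_N] at *; have := ih r; rwa [show h + d + m = h + m + d by omega]
    | E =>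
      replace r := run_E.1 r; obtain ⟨h', rfl, r⟩ := r
      exact ⟨h' + d, by omega, ih r⟩

theorem run_det {m : ℕ} {w : List Step} {h k k' : ℕ} (r : Run m h w k) (r' : Run m h w k') :
    k = k' := by
  have := run_net r; have := run_net r'; omega

theorem run_iff {m : ℕ} {w : List Step} {h : ℕ} :
    Run m h w 0 ↔ (∀ k, eastCount (w.take k) ≤ h + m * northCount (w.take k)) ∧
      eastCount w = h + m * northCount w := by
  induction w generalizing h with
  | nil => simp [run_nil, northCount_nil, eastCount_nil, eq_comm]
  | cons s w ih =>
    cases s with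
    | N =>
      rw [run_N, ih, northCount_N, eastCount_N]
      have e1 : h + m + m * northCount w = h + m * (northCount w + 1) := by ring
      rw [e1]
      refine and_congr_left fun _ => ⟨fun H k => ?_, fun H k => ?_⟩
      · cases k with
        | zero => simp [eastCount_nil]
        | succ k => rw [List.take_succ_cons, northCount_N, eastCount_N]; linarith [H k, mul_add m (northCount (w.take k)) 1]
      · have := H (k + 1); rw [List.take_succ_cons, northCount_N, eastCount_N] at this
        linarith [mul_add m (northCount (w.take k)) 1]
    | E =>
      rw [northCount_E, eastCount_E]
      cases h with
      | zero =>
        constructor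
        · rintro ⟨h', e, _⟩; omega
        · rintro ⟨H, _⟩; have := H 1
          simp [List.take_succ_cons, northCount_E, eastCount_E, northCount_nil] at this
      | succ h =>
        rw [run_E_succ, ih]
        refine and_congr ⟨fun H k => ?_, fun H k => ?_⟩ (by omega)
        · cases k with
          | zero => simp [eastCount_nil]
          | succ k => rw [List.take_succ_cons, northCount_E, eastCount_E]; linarith [H k]
        · have := H (k + 1); rw [List.take_succ_cons, northCount_E, eastCount_E] at this
          linarith

theorem isBallot_iff {m : ℕ} {w : List Step} : IsBallot m w ↔ Run m 0 w 0 := by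
  rw [run_iff]; simp [IsBallot]

/-- First passage decomposition. -/
theorem first_passage {m : ℕ} {Q : List Step} {a : ℕ} (r : Run m (a + 1) Q 0) :
    ∃ Q1 Q2, Q = Q1 ++ E :: Q2 ∧ Run m a Q1 0 ∧ Run m 0 Q2 0 := by
  induction Q generalizing a with
  | nil => rw [run_nil] at r; omega
  | cons s w ih =>
    cases s with
    | N =>
      rw [run_N, show a + 1 + m = a + m + 1 by omega] at r
      obtain ⟨Q1, Q2, e, r1, r2⟩ := ih r
      exact ⟨N :: Q1, Q2, by simp [e], r1, r2⟩
    | E =>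
      rw [run_E_succ] at r
      cases a with
      | zero => exact ⟨[], w, rfl, rfl, r⟩
      | succ a =>
        obtain ⟨Q1, Q2, e, r1, r2⟩ := ih r
        exact ⟨E :: Q1, Q2, by simp [e], run_E_succ.2 r1, r2⟩

theorem first_passage_unique {m : ℕ} {Q1 Q1' Q2 Q2' : List Step} {a : ℕ}
    (e : Q1 ++ E :: Q2 = Q1' ++ E :: Q2') (r : Run m a Q1 0) (r' : Run m a Q1' 0) :
    Q1 = Q1' ∧ Q2 = Q2' := by
  induction Q1 generalizing a Q1' with
  | nil =>
    cases Q1' with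
    | nil => simpa using e
    | cons s' w' =>
      simp only [List.nil_append, List.cons_append, List.cons.injEq] at e
      obtain ⟨rfl, e⟩ := e
      rw [run_nil] at r; obtain ⟨_, h, _⟩ := run_E.1 r'; omega
  | cons s w ih =>
    cases Q1' with
    | nil =>
      simp only [List.nil_append, List.cons_append, List.cons.injEq] at e
      obtain ⟨rfl, e⟩ := e
      rw [run_nil] at r'; obtain ⟨_, h, _⟩ := run_E.1 r; omega
    | cons s' w' =>
      simp only [List.cons_append, List.cons.injEq] at e
      obtain ⟨rfl, e⟩ := e
      cases s with
      | N => obtain ⟨h1, h2⟩ := ih e (run_N.1 r) (run_N.1 r'); exact ⟨by rw [h1], h2⟩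
      | E =>
        replace r := run_E.1 r; obtain ⟨h', rfl, r⟩ := r
        rw [run_E_succ] at r'
        obtain ⟨h1, h2⟩ := ih e r r'; exact ⟨by rw [h1], h2⟩

theorem run_join {m : ℕ} {Q1 Q2 : List Step} {a : ℕ} (r1 : Run m a Q1 0) (r2 : Run m 0 Q2 0) :
    Run m (a + 1) (Q1 ++ E :: Q2) 0 := by
  rw [run_append]
  exact ⟨1, by simpa using run_shift 1 r1, by rw [show (1:ℕ) = 0 + 1 from rfl, run_E_succ]; exact r2⟩

/-! ### Order lemmas -/

theorem cover_context {m : ℕ} {P Q : List Step} (u v : List Step) (h : TamariCovers m P Q) :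
    TamariCovers m (u ++ P ++ v) (u ++ Q ++ v) := by
  obtain ⟨w₁, S, w₂, h1, h2, h3, h4, rfl, rfl⟩ := h
  exact ⟨u ++ w₁, S, w₂ ++ v, h1, h2, h3, h4, by simp, by simp⟩

theorem le_context {m : ℕ} {P Q : List Step} (u v : List Step) (h : TamariLE m P Q) :
    TamariLE m (u ++ P ++ v) (u ++ Q ++ v) := by
  induction h with
  | refl => exact Relation.ReflTransGen.refl
  | tail _ hc ih => exact ih.tail (cover_context u v hc)

theorem le_N {m : ℕ} {P Q : List Step} (h : TamariLE m P Q) : TamariLE m (N :: P) (N :: Q) := by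
  simpa using le_context [N] [] h

theorem of_le_N {m : ℕ} {P Q : List Step} (h : TamariLE m (N :: P) (N :: Q)) : TamariLE m P Q := by
  suffices H : ∀ X, TamariLE m X (N :: Q) → ∀ P, X = N :: P → TamariLE m P Q from H _ h _ rfl
  intro X hX
  induction hX using Relation.ReflTransGen.head_induction_on with
  | refl => intro P e; cases e; exact Relation.ReflTransGen.refl
  | head hc _ ih =>
    intro P e
    obtain ⟨w₁, S, w₂, h1, h2, h3, h4, e1, e2⟩ := hc
    cases w₁ with
    | nil => rw [e1] at e; simp at e
    | cons s w =>
      rw [e1] at e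
      simp only [List.cons_append, List.cons.injEq] at e
      obtain ⟨rfl, rfl⟩ := e
      refine Relation.ReflTransGen.head ?_ (ih (w ++ S ++ E :: w₂) (by rw [e2]; simp only [List.cons_append]))
      exact ⟨w, S, w₂, h1, h2, h3, h4, rfl, rfl⟩

theorem cover_run {m a : ℕ} {P Q : List Step} (h : TamariCovers m P Q) (r : Run m a Q 0) :
    Run m a P 0 := by
  obtain ⟨w₁, S, w₂, h1, h2, h3, h4, rfl, rfl⟩ := h
  rw [isBallot_iff] at h3
  rw [List.append_assoc, run_append] at r
  obtain ⟨j, r1, r⟩ := r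
  rw [run_append] at r
  obtain ⟨j', r2, r3⟩ := r
  have := run_shift j h3
  rw [Nat.zero_add] at this
  have := run_det this r2
  subst this
  replace r3 := run_E.1 r3; obtain ⟨i, rfl, r3⟩ := r3
  rw [run_append]
  refine ⟨i + 1, r1, run_E_succ.2 ?_⟩
  rw [run_append]
  exact ⟨i, by simpa using run_shift i h3, r3⟩

theorem cover_north {m : ℕ} {P Q : List Step} (h : TamariCovers m P Q) :
    northCount P = northCount Q := by
  obtain ⟨w₁, S, w₂, h1, h2, h3, h4, rfl, rfl⟩ := h
  simp [northCount_append, northCount_E]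

theorem le_run {m a : ℕ} {P Q : List Step} (h : TamariLE m P Q) (r : Run m a Q 0) :
    Run m a P 0 := by
  induction h with
  | refl => exact r
  | tail _ hc ih => exact ih (cover_run hc r)

theorem le_north {m : ℕ} {P Q : List Step} (h : TamariLE m P Q) :
    northCount P = northCount Q := by
  induction h with
  | refl => rfl
  | tail _ hc ih => exact ih.trans (cover_north hc)

/-- An east step slides right past a ballot word. -/
theorem slide {m : ℕ} (B : List Step) (hB : Run m 0 B 0) :
    TamariLE m (E :: B) (B ++ [E]) := by
  classical
  induction hl : B.length using Nat.strong_induction_on generalizing B with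
  | _ l ih =>
  cases B with
  | nil => exact Relation.ReflTransGen.refl
  | cons s w =>
    cases s with
    | E => obtain ⟨_, h, _⟩ := run_E.1 hB; omega
    | N =>
      have hex : ∃ k, 0 < k ∧ IsBallot m ((N :: w).take k) :=
        ⟨(N :: w).length, by simp, by rw [List.take_length]; exact isBallot_iff.2 hB⟩
      obtain ⟨hk0, hk⟩ := Nat.find_spec hex
      have hmin := fun k => @Nat.find_min _ _ hex k
      set k := Nat.find hex
      have hsplit := List.take_append_drop k (N :: w)
      rw [← hsplit, run_append] at hB
      obtain ⟨j, r1, r2⟩ := hB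
      have := run_det r1 (isBallot_iff.1 hk); subst this
      have hlen : ((N :: w).drop k).length < l := by
        rw [List.length_drop, ← hl]; simp; omega
      have IH := ih _ hlen _ r2 rfl
      obtain ⟨k', hk'⟩ : ∃ k', k = k' + 1 := ⟨k - 1, by omega⟩
      have hc : TamariCovers m (E :: (N :: w)) ((N :: w).take k ++ E :: (N :: w).drop k) := by
        refine ⟨[], (N :: w).take k, (N :: w).drop k, ?_, ?_, hk, ?_, ?_, ?_⟩
        · rw [hk']; simp
        · rw [hk']; simp
        · intro i hi hi2 hb
          rw [List.length_take] at hi2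
          rw [List.take_take, min_eq_left (by omega)] at hb
          exact hmin i (by omega) ⟨hi, hb⟩
        · simp
        · simp
      refine Relation.ReflTransGen.head hc ?_
      have := le_context ((N :: w).take k) [] IH
      simp only [List.append_nil] at this
      rwa [← List.append_assoc, hsplit] at this

theorem join_le {m : ℕ} {A B C Q1 Q2 : List Step} (hB : Run m 0 B 0)
    (h1 : TamariLE m (A ++ B) Q1) (h2 : TamariLE m C Q2) :
    TamariLE m (A ++ E :: (B ++ C)) (Q1 ++ E :: Q2) := by
  have e1 := le_context A C (slide B hB)
  have e2 := le_context [] (E :: C) h1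
  have e3 := le_context (Q1 ++ [E]) [] h2
  simp only [List.append_nil, List.nil_append, List.append_assoc, List.cons_append] at e1 e2 e3
  exact (e1.trans e2).trans e3

theorem bad_suffix {m j : ℕ} {S z b : List Step} (e : S = z ++ b) (hS : Run m 0 S 0)
    (hb : Run m 0 b (j + 1)) : False := by
  subst e
  rw [run_append] at hS
  obtain ⟨i, r1, r2⟩ := hS
  have := run_net r2; have := run_net hb; omega

/-- If `S` is a suffix of `x ++ b` where `b` rises, then `S` is... -/
theorem suffix_case {m j : ℕ} {w S x b : List Step} (e : w ++ S = x ++ b) (hS : Run m 0 S 0)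
    (hb : Run m 0 b (j + 1)) : ∃ b0, b = b0 ++ S ∧ w = x ++ b0 := by
  rcases List.append_eq_append_iff.1 e with ⟨z, h1, h2⟩ | ⟨z, h1, h2⟩
  · exact (bad_suffix h2 hS hb).elim
  · exact ⟨z, h2, h1⟩

theorem decompose_le {m a : ℕ} {P Q1 Q2 : List Step} (h : TamariLE m P (Q1 ++ E :: Q2))
    (r1 : Run m a Q1 0) (r2 : Run m 0 Q2 0) :
    ∃ A B C, P = A ++ E :: (B ++ C) ∧ Run m a A 0 ∧ Run m 0 B 0 ∧ Run m 0 C 0 ∧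
      TamariLE m (A ++ B) Q1 ∧ TamariLE m C Q2 := by
  induction h using Relation.ReflTransGen.head_induction_on with
  | refl => exact ⟨Q1, [], Q2, rfl, r1, rfl, r2, by rw [List.append_nil]; exact Relation.ReflTransGen.refl,
      Relation.ReflTransGen.refl⟩
  | head hc _ ih =>
    obtain ⟨A, B, C, e, rA, rB, rC, l1, l2⟩ := ih
    obtain ⟨w₁, S, w₂, h1, h2, h3, h4, e1, e2⟩ := hc
    have hcov : ∀ u v, TamariCovers m (u ++ E :: (S ++ v)) (u ++ S ++ E :: v) := fun u v =>
      ⟨u, S, v, h1, h2, h3, h4, rfl, rfl⟩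
    have h3' := isBallot_iff.1 h3
    rw [e2] at e
    subst e1
    -- locate the east step
    rcases List.append_eq_append_iff.1 e with ⟨z, q1, q2⟩ | ⟨z, q1, q2⟩
    · -- `A = w₁ ++ S ++ z`
      cases z with
      | nil =>
        simp only [List.append_nil, List.nil_append, List.cons.injEq, true_and] at q1 q2
        subst q2
        rw [q1, run_append] at rA
        obtain ⟨j, ra, rb⟩ := rA
        have := run_net rb; have := run_net h3'
        obtain rfl : j = 0 := by omega
        refine ⟨w₁, S ++ B, C, by simp, ra, (run_append _ _).2 ⟨0, h3', rB⟩, rC, ?_, l2⟩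
        rw [q1] at l1; simpa using l1
      | cons s a2 =>
        simp only [List.cons_append, List.cons.injEq] at q2
        obtain ⟨rfl, rfl⟩ := q2
        have hcv := hcov w₁ a2
        rw [← q1] at hcv
        refine ⟨w₁ ++ E :: (S ++ a2), B, C, by simp, cover_run hcv rA, rB, rC, ?_, l2⟩
        have := cover_context [] B hcv
        simp only [List.nil_append] at this
        exact Relation.ReflTransGen.head this l1
    · -- `w₁ ++ S = A ++ z`
      cases z with
      | nil =>
        simp only [List.append_nil, List.nil_append, List.cons.injEq, true_and] at q1 q2
        subst q2
        rw [← q1, run_append] at rA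
        obtain ⟨j, ra, rb⟩ := rA
        have := run_net rb; have := run_net h3'
        obtain rfl : j = 0 := by omega
        refine ⟨w₁, S ++ B, C, by simp, ra, (run_append _ _).2 ⟨0, h3', rB⟩, rC, ?_, l2⟩
        rw [← q1] at l1; simpa using l1
      | cons s z =>
        simp only [List.cons_append, List.cons.injEq] at q2
        obtain ⟨rfl, q2⟩ := q2
        have key : ∀ b j, Run m 0 b (j + 1) → ∀ x, w₁ ++ S = x ++ b → ∃ b0, b = b0 ++ S ∧ w₁ = x ++ b0 :=
          fun b j hb x ex => suffix_case ex h3' hb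
        rcases List.append_eq_append_iff.1 q2 with ⟨y, p1, p2⟩ | ⟨y, p1, p2⟩
        · -- `z = B ++ y`, `C = y ++ E :: w₂`
          rw [p2, run_append] at rC
          obtain ⟨j, ra, rb⟩ := rC
          replace rb := run_E.1 rb; obtain ⟨i, rfl, rb⟩ := rb
          obtain ⟨b0, t1, t2⟩ := key y i ra (A ++ E :: B) (by rw [q1, p1]; simp)
          have hcv := hcov b0 w₂
          rw [← t1, ← p2] at hcv
          have rC' : Run m 0 C 0 := by
            rw [p2, run_append]; exact ⟨_, ra, run_E_succ.2 rb⟩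
          refine ⟨A, B, b0 ++ E :: (S ++ w₂), by rw [t2]; simp, rA, rB, cover_run hcv rC', l1, ?_⟩
          exact Relation.ReflTransGen.head hcv l2
        · -- `B = z ++ y`, `E :: w₂ = y ++ C`
          cases y with
          | nil =>
            simp only [List.append_nil, List.nil_append] at p1 p2
            have rC' := rC
            rw [← p2] at rC
            obtain ⟨_, h, _⟩ := run_E.1 rC; omega
          | cons s b2 =>
            simp only [List.cons_append, List.cons.injEq] at p2
            obtain ⟨rfl, p2⟩ := p2
            have rB' := rB
            rw [p1, run_append] at rB
            obtain ⟨j, ra, rb⟩ := rB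
            replace rb := run_E.1 rb; obtain ⟨i, rfl, rb⟩ := rb
            obtain ⟨b0, t1, t2⟩ := key z i ra (A ++ [E]) (by rw [q1]; simp)
            have hcv := hcov b0 b2
            rw [← t1, ← p1] at hcv
            refine ⟨A, b0 ++ E :: (S ++ b2), C, by rw [t2, p2]; simp, rA, cover_run hcv rB', rC, ?_, l2⟩
            have := cover_context A [] hcv
            simp only [List.append_nil] at this
            exact Relation.ReflTransGen.head this l1

end TI

namespace TI
open Step Polynomial

/-- number of contacts with height zero -/
def cnt (m : ℕ) : ℕ → List Step → ℕ
  | h, [] => if h = 0 then 1 else 0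
  | h, N :: w => (if h = 0 then 1 else 0) + cnt m (h + m) w
  | h, E :: w => (if h = 0 then 1 else 0) + cnt m (h - 1) w

/-- weight of the ascents, with `r` pending north steps -/
def wts {R : Type*} [CommRing R] (h : ℕ → R) : ℕ → List Step → R
  | r, [] => h r
  | r, N :: w => wts h (r + 1) w
  | r, E :: w => h r * wts h 0 w

theorem wts_append {R : Type*} [CommRing R] (h : ℕ → R) (r : ℕ) (Q1 Q2 : List Step) :
    wts h r (Q1 ++ E :: Q2) = wts h r Q1 * wts h 0 Q2 := by
  induction Q1 generalizing r with
  | nil => rfl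
  | cons s w ih => cases s <;> simp only [List.cons_append, wts, ih, mul_assoc]

theorem cnt_append {m : ℕ} (A B : List Step) {h j : ℕ} (r : Run m h A j) :
    cnt m h (A ++ B) + (if j = 0 then 1 else 0) = cnt m h A + cnt m j B := by
  induction A generalizing h with
  | nil => rw [run_nil] at r; subst r; simp [cnt]; omega
  | cons s A ih =>
    cases s with
    | N => have := ih (run_N.1 r); simp only [List.cons_append, cnt]; omega
    | E =>
      obtain ⟨h', e, r'⟩ := run_E.1 r
      have := ih r'
      subst e
      simp only [List.cons_append, cnt, Nat.add_sub_cancel]; omega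

theorem cnt_shift {m : ℕ} (A : List Step) {h j : ℕ} (r : Run m h A j) : cnt m (h + 1) A = 0 := by
  induction A generalizing h with
  | nil => simp [cnt]
  | cons s A ih =>
    cases s with
    | N => have := ih (run_N.1 r); simp only [cnt]; rw [show h + 1 + m = h + m + 1 by omega, this]; simp
    | E =>
      obtain ⟨h', e, r'⟩ := run_E.1 r
      have := ih r'
      subst e
      simp [cnt, this]

theorem cnt_pos (m : ℕ) (A : List Step) : 1 ≤ cnt m 0 A := by
  cases A with
  | nil => simp [cnt]
  | cons s w => cases s <;> simp [cnt]

theorem cnt_join {m a : ℕ} {A B C : List Step} (rA : Run m a A 0) (rB : Run m 0 B 0) :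
    cnt m (a + 1) (A ++ E :: (B ++ C)) = (cnt m 0 B - 1) + cnt m 0 C := by
  have h1 := cnt_append A (E :: (B ++ C)) (run_shift 1 rA)
  have h2 := cnt_append B C rB
  have h3 := cnt_shift A rA
  have h4 := cnt_pos m B
  simp only [cnt] at h1
  simp at h1 h2
  omega

open Classical in
/-- contact positions -/
noncomputable def conts (m a : ℕ) (w : List Step) : Finset ℕ :=
  (Finset.range (w.length + 1)).filter (fun k => Run m a (w.take k) 0)

theorem divX_mul_one_add {R : Type*} [CommRing R] (p : R[X]) : divX ((1 + X) * p) = p + divX p := by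
  rw [add_mul, one_mul, divX_add, mul_comm X p, add_comm]
  congr 1
  ext n
  rw [coeff_divX, coeff_mul_X]

theorem divX_cnt {R : Type*} [CommRing R] {m a j : ℕ} (w : List Step) (r : Run m a w j) :
    divX ((1 + X : R[X]) ^ cnt m a w)
      = ∑ k ∈ conts m a w, (1 + X : R[X]) ^ (cnt m 0 (w.drop k) - 1) := by
  classical
  induction w generalizing a with
  | nil =>
    simp only [conts, Finset.sum_filter, List.length_nil, zero_add, Finset.sum_range_one, List.take_nil, run_nil, cnt, List.drop_nil]
    split_ifs <;> simp
    have := divX_mul_one_add (1 : R[X]); simpa using this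
  | cons s w ih =>
    have key : ∀ a', Run m a' w j → (∀ k, Run m a (s :: w.take k) 0 ↔ Run m a' (w.take k) 0) →
        cnt m a (s :: w) = (if a = 0 then 1 else 0) + cnt m a' w →
        divX ((1 + X : R[X]) ^ cnt m a (s :: w))
          = ∑ k ∈ conts m a (s :: w), (1 + X : R[X]) ^ (cnt m 0 ((s :: w).drop k) - 1) := by
      intro a' r' hk hc
      have IH := ih r'
      unfold conts at IH ⊢
      rw [Finset.sum_filter] at IH ⊢
      rw [List.length_cons, Finset.sum_range_succ']
      simp only [List.take_succ_cons, List.drop_succ_cons, hk, List.take_zero, List.drop_zero, run_nil]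
      rw [← IH, hc]
      split_ifs with h0
      · subst h0
        rw [pow_add, pow_one, divX_mul_one_add, add_comm, hc]
        simp
      · simp
    cases s with
    | N => exact key (a + m) r (fun k => run_N) rfl
    | E =>
      obtain ⟨h', e, r'⟩ := run_E.1 r
      subst e
      exact key h' r' (fun k => run_E_succ) (by simp [cnt])

instance finite_step : Finite Step :=
  Finite.of_injective (fun s => decide (s = N)) (by intro a b; cases a <;> cases b <;> simp)

theorem run_length {m a : ℕ} {w : List Step} (r : Run m a w 0) :
    w.length = a + (m + 1) * northCount w := by
  have := run_net r; rw [length_eq_counts]; linarith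

theorem I_finite (m a n : ℕ) : {x : List Step × List Step |
    Run m a x.2 0 ∧ northCount x.2 = n ∧ TamariLE m x.1 x.2}.Finite := by
  refine Set.Finite.subset ((List.finite_length_eq Step (a + (m + 1) * n)).prod
    (List.finite_length_eq Step (a + (m + 1) * n))) ?_
  rintro ⟨P, Q⟩ ⟨h1, h2, h3⟩
  have h4 := le_run h3 h1
  have h5 := le_north h3
  dsimp only at *
  exact ⟨by simp only [Set.mem_ofPred_eq]; rw [run_length h4, h5, h2], by simp only [Set.mem_ofPred_eq]; rw [run_length h1, h2]⟩

/-- intervals -/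
noncomputable def Iv (m a n : ℕ) : Finset (List Step × List Step) := (I_finite m a n).toFinset

theorem mem_Iv {m a n : ℕ} {x : List Step × List Step} : x ∈ Iv m a n ↔
    Run m a x.2 0 ∧ northCount x.2 = n ∧ TamariLE m x.1 x.2 := by
  simp [Iv]

/-- generating polynomial -/
noncomputable def Zp {R : Type*} [CommRing R] (h : ℕ → R) (m a r n : ℕ) : R[X] :=
  ∑ x ∈ Iv m a n, C (wts h r x.2) * (1 + X) ^ cnt m a x.1

theorem nil_of_north {w : List Step} {m : ℕ} (r : Run m 0 w 0) (h : northCount w = 0) : w = [] := by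
  have := run_length r; rw [h] at this; simpa using this

theorem Iv_zero (m : ℕ) : Iv m 0 0 = {([], [])} := by
  ext ⟨P, Q⟩
  rw [mem_Iv, Finset.mem_singleton, Prod.mk.injEq]
  constructor
  · rintro ⟨h1, h2, h3⟩
    have h4 := le_run h3 h1
    have h5 := le_north h3
    exact ⟨nil_of_north h4 (by dsimp only at *; omega), nil_of_north h1 h2⟩
  · rintro ⟨rfl, rfl⟩; exact ⟨rfl, rfl, Relation.ReflTransGen.refl⟩

theorem Zp_zero {R : Type*} [CommRing R] (h : ℕ → R) (m r : ℕ) :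
    Zp h m 0 r 0 = C (h r) * (1 + X) := by
  simp [Zp, Iv_zero, wts, cnt]

theorem ballot_cons {m n : ℕ} {w : List Step} (r : Run m 0 w 0) (h : northCount w = n + 1) :
    ∃ v, w = N :: v := by
  cases w with
  | nil => simp [northCount_nil] at h
  | cons s w =>
    cases s with
    | N => exact ⟨w, rfl⟩
    | E => obtain ⟨_, h, _⟩ := run_E.1 r; omega

theorem Zp_succ {R : Type*} [CommRing R] (h : ℕ → R) (m r n : ℕ) :
    Zp h m 0 r (n + 1) = (1 + X) * Zp h m m (r + 1) n := by
  unfold Zp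
  rw [Finset.mul_sum]
  symm
  refine Finset.sum_bij (fun x _ => (N :: x.1, N :: x.2)) ?_ ?_ ?_ ?_
  · rintro ⟨P, Q⟩ hx
    obtain ⟨h1, h2, h3⟩ := mem_Iv.1 hx
    exact mem_Iv.2 ⟨by rw [run_N, zero_add]; exact h1, by rw [northCount_N, h2], le_N h3⟩
  · rintro ⟨P, Q⟩ _ ⟨P', Q'⟩ _ e; simpa using e
  · rintro ⟨P, Q⟩ hx
    obtain ⟨h1, h2, h3⟩ := mem_Iv.1 hx
    have h4 := le_run h3 h1
    have h5 := le_north h3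
    dsimp only at *
    obtain ⟨P, rfl⟩ := ballot_cons (n := n) h4 (by omega)
    obtain ⟨Q, rfl⟩ := ballot_cons (n := n) h1 (by omega)
    rw [run_N, zero_add] at h1
    rw [northCount_N] at h2
    exact ⟨(P, Q), mem_Iv.2 ⟨h1, by dsimp only; omega, of_le_N h3⟩, rfl⟩
  · rintro ⟨P, Q⟩ hx
    simp only [wts, cnt, if_true, zero_add]
    ring

theorem mem_conts {m a k : ℕ} {w : List Step} :
    k ∈ conts m a w ↔ k ≤ w.length ∧ Run m a (w.take k) 0 := by
  classical
  simp [conts]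

theorem Zp_step {R : Type*} [CommRing R] (h : ℕ → R) (m a r n : ℕ) :
    Zp h m (a + 1) r n
      = ∑ ij ∈ Finset.HasAntidiagonal.antidiagonal n, Zp h m 0 0 ij.2 * divX (Zp h m a r ij.1) := by
  have hd : ∀ i, divX (Zp h m a r i) = ∑ x ∈ Iv m a i, ∑ k ∈ conts m a x.1,
      C (wts h r x.2) * (1 + X) ^ (cnt m 0 (x.1.drop k) - 1) := by
    intro i
    unfold Zp
    have : ∀ p : R[X], divX p = divX_hom p := fun p => rfl
    rw [this, map_sum]
    refine Finset.sum_congr rfl fun x hx => ?_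
    obtain ⟨h1, h2, h3⟩ := mem_Iv.1 hx
    rw [← this, divX_C_mul, divX_cnt _ (le_run h3 h1), Finset.mul_sum]
  simp only [hd]
  have hrhs : ∀ ij : ℕ × ℕ, Zp h m 0 0 ij.2 * (∑ x ∈ Iv m a ij.1, ∑ k ∈ conts m a x.1,
      C (wts h r x.2) * (1 + X) ^ (cnt m 0 (x.1.drop k) - 1))
      = ∑ y ∈ Iv m 0 ij.2, ∑ x ∈ Iv m a ij.1, ∑ k ∈ conts m a x.1,
        (C (wts h 0 y.2) * (1 + X) ^ cnt m 0 y.1) *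
        (C (wts h r x.2) * (1 + X) ^ (cnt m 0 (x.1.drop k) - 1)) := by
    intro ij
    unfold Zp
    rw [Finset.sum_mul]
    refine Finset.sum_congr rfl fun y _ => ?_
    simp only [Finset.mul_sum]
  simp only [hrhs]
  simp only [Finset.sum_sigma']
  symm
  unfold Zp
  have runs : ∀ {P : List Step} {k : ℕ}, Run m a P 0 → Run m a (P.take k) 0 →
      Run m 0 (P.drop k) 0 := by
    intro P k h1 h2
    rw [← List.take_append_drop k P, run_append] at h1
    obtain ⟨j, ra, rb⟩ := h1
    have := run_det ra h2
    subst this; exact rb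
  refine Finset.sum_bij (fun t _ => (t.2.2.1.1.take t.2.2.2 ++ E :: (t.2.2.1.1.drop t.2.2.2 ++ t.2.1.1),
      t.2.2.1.2 ++ E :: t.2.1.2)) ?_ ?_ ?_ ?_
  · rintro ⟨⟨i, j⟩, ⟨C, Q2⟩, ⟨P1, Q1⟩, k⟩ ht
    simp only [Finset.mem_sigma, Finset.HasAntidiagonal.mem_antidiagonal, mem_Iv, mem_conts] at ht
    obtain ⟨hij, ⟨c1, c2, c3⟩, ⟨p1, p2, p3⟩, k1, k2⟩ := ht
    refine mem_Iv.2 ⟨run_join p1 c1, ?_, ?_⟩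
    · simp only [northCount_append, northCount_E]; omega
    · exact join_le (runs (le_run p3 p1) k2) (by rw [List.take_append_drop]; exact p3) c3
  · rintro ⟨⟨i, j⟩, ⟨C, Q2⟩, ⟨P1, Q1⟩, k⟩ ht ⟨⟨i', j'⟩, ⟨C', Q2'⟩, ⟨P1', Q1'⟩, k'⟩ ht' e
    simp only [Finset.mem_sigma, Finset.HasAntidiagonal.mem_antidiagonal, mem_Iv, mem_conts] at ht ht'
    obtain ⟨hij, ⟨c1, c2, c3⟩, ⟨p1, p2, p3⟩, k1, k2⟩ := ht
    obtain ⟨hij', ⟨c1', c2', c3'⟩, ⟨p1', p2', p3'⟩, k1', k2'⟩ := ht'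
    simp only [Prod.mk.injEq] at e
    obtain ⟨e1, e2⟩ := e
    obtain ⟨rfl, rfl⟩ := first_passage_unique e2 p1 p1'
    obtain ⟨f1, f2⟩ := first_passage_unique e1 k2 k2'
    have n1 := le_north p3
    have n1' := le_north p3'
    have r1 := run_length (runs (le_run p3 p1) k2)
    have r1' := run_length (runs (le_run p3' p1') k2')
    have s1 := northCount_append (P1.take k) (P1.drop k)
    have s1' := northCount_append (P1'.take k') (P1'.drop k')
    rw [List.take_append_drop] at s1 s1'
    rw [← f1] at s1'
    have nn : northCount (P1.drop k) = northCount (P1'.drop k') := by omega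
    obtain ⟨g1, rfl⟩ := List.append_inj f2 (by rw [r1, r1', nn])
    obtain rfl : P1 = P1' := by
      rw [← List.take_append_drop k P1, f1, g1, List.take_append_drop]
    obtain rfl : k = k' := by
      have := congrArg List.length f1
      rw [List.length_take, List.length_take] at this
      omega
    obtain rfl : i = i' := by omega
    obtain rfl : j = j' := by omega
    rfl
  · rintro ⟨P, Q⟩ hx
    obtain ⟨h1, h2, h3⟩ := mem_Iv.1 hx
    dsimp only at *
    obtain ⟨Q1, Q2, rfl, q1, q2⟩ := first_passage h1
    obtain ⟨A, B, C, rfl, rA, rB, rC, l1, l2⟩ := decompose_le h3 q1 q2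
    refine ⟨⟨(northCount Q1, northCount Q2), (C, Q2), (A ++ B, Q1), A.length⟩, ?_, by simp⟩
    simp only [Finset.mem_sigma, Finset.HasAntidiagonal.mem_antidiagonal, mem_Iv, mem_conts]
    refine ⟨?_, ⟨q2, trivial, l2⟩, ⟨q1, trivial, l1⟩, by simp, by simpa using rA⟩
    rw [northCount_append, northCount_E] at h2; exact h2
  · rintro ⟨⟨i, j⟩, ⟨C, Q2⟩, ⟨P1, Q1⟩, k⟩ ht
    simp only [Finset.mem_sigma, Finset.HasAntidiagonal.mem_antidiagonal, mem_Iv, mem_conts] at ht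
    obtain ⟨hij, ⟨c1, c2, c3⟩, ⟨p1, p2, p3⟩, k1, k2⟩ := ht
    dsimp only
    rw [wts_append, cnt_join k2 (runs (le_run p3 p1) k2), pow_add, Polynomial.C_mul]
    ring

end TI

namespace TI
open Step

/-- The system of quadratic equations. -/
def IsSol {K : Type*} [CommRing K] (t : K) (h : ℕ → K) (m : ℕ) (X : ℕ → K) (Z : ℕ → ℕ → K) : Prop :=
  X 0 = 1 ∧ (∀ k, X (k + 1) = Z 0 k) ∧
    ∀ r k, Z r k = h r * X k +
      t * ∑ p ∈ Finset.HasAntidiagonal.antidiagonal k, X p.1 * Z (r + 1) (p.2 + m)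

section twisted
variable {K A : Type*} [CommRing K] [CommRing A] (ε : A →+* K) (ι : K →+* A) (D : A →+ A)

theorem seq_mul (hει : ∀ k, ε (ι k) = k) (hι : ∀ k, D (ι k) = 0)
    (hD : ∀ a b, D (a * b) = D a * b + ι (ε a) * D b) (k : ℕ) (a b : A) :
    ε (D^[k] (a * b)) = ∑ p ∈ Finset.HasAntidiagonal.antidiagonal k, ε (D^[p.1] a) * ε (D^[p.2] b) := by
  induction k generalizing a b with
  | zero => simp
  | succ k ih =>
    have hadd : ∀ k (x y : A), D^[k] (x + y) = D^[k] x + D^[k] y := by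
      intro k; induction k with
      | zero => intro x y; rfl
      | succ k ih => intro x y; simp only [Function.iterate_succ, Function.comp, map_add, ih]
    have hlin : ∀ k (c : K) (x : A), D^[k] (ι c * x) = ι c * D^[k] x := by
      intro k; induction k with
      | zero => intro x y; rfl
      | succ k ih => intro c x; simp only [Function.iterate_succ, Function.comp, hD, hι, hει, zero_mul, zero_add, ih]
    rw [Function.iterate_succ, Function.comp, hD, hadd, map_add, ih, hlin, map_mul, hει,
      Finset.Nat.sum_antidiagonal_succ]
    simp only [Function.iterate_succ, Function.comp, Function.iterate_zero, id]
    rw [add_comm]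

theorem isSol_of_twisted (hει : ∀ k, ε (ι k) = k) (hι : ∀ k, D (ι k) = 0)
    (hD : ∀ a b, D (a * b) = D a * b + ι (ε a) * D b) (t : K) (h : ℕ → K) (m : ℕ)
    (x : A) (S : ℕ → A) (hx : ε x = 1) (hxS : D x = S 0)
    (hS : ∀ r, S r = ι (h r) * x + ι t * (x * D^[m] (S (r + 1)))) :
    IsSol t h m (fun k => ε (D^[k] x)) (fun r k => ε (D^[k] (S r))) := by
  refine ⟨hx, fun k => by simp only [Function.iterate_succ, Function.comp, hxS], fun r k => ?_⟩
  have hadd : ∀ k (x y : A), D^[k] (x + y) = D^[k] x + D^[k] y := by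
    intro k; induction k with
    | zero => intro x y; rfl
    | succ k ih => intro x y; simp only [Function.iterate_succ, Function.comp, map_add, ih]
  have hlin : ∀ k (c : K) (x : A), D^[k] (ι c * x) = ι c * D^[k] x := by
    intro k; induction k with
    | zero => intro x y; rfl
    | succ k ih => intro c x; simp only [Function.iterate_succ, Function.comp, hD, hι, hει, zero_mul, zero_add, ih]
  dsimp only
  conv_lhs => rw [hS r]
  rw [hadd, hlin, hlin, map_add, map_mul, map_mul, hει, hει, seq_mul ε ι D hει hι hD]
  simp only [Function.iterate_add, Function.comp]

end twisted

theorem isSol_unique {R : Type*} [CommRing R] (h : ℕ → PowerSeries R) (m : ℕ)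
    {Y Y' : ℕ → PowerSeries R} {Z Z' : ℕ → ℕ → PowerSeries R}
    (s : IsSol PowerSeries.X h m Y Z) (s' : IsSol PowerSeries.X h m Y' Z') : Y 1 = Y' 1 := by
  obtain ⟨a1, a2, a3⟩ := s
  obtain ⟨b1, b2, b3⟩ := s'
  have main : ∀ n : ℕ, ∀ k, (PowerSeries.X ^ n ∣ Y k - Y' k) ∧
      ∀ r, (PowerSeries.X : PowerSeries R) ^ n ∣ Z r k - Z' r k := by
    intro n
    induction n with
    | zero => intro k; simp
    | succ n ih =>
      have hz : ∀ k, (PowerSeries.X ^ (n + 1) ∣ Y k - Y' k) →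
          ∀ r, (PowerSeries.X : PowerSeries R) ^ (n + 1) ∣ Z r k - Z' r k := by
        intro k hk r
        rw [a3, b3, add_sub_add_comm, ← mul_sub, ← mul_sub, ← Finset.sum_sub_distrib]
        refine dvd_add (Dvd.dvd.mul_left hk _) ?_
        rw [pow_succ', ]
        refine mul_dvd_mul_left _ (Finset.dvd_sum fun p _ => ?_)
        have e : Y p.1 * Z (r + 1) (p.2 + m) - Y' p.1 * Z' (r + 1) (p.2 + m)
          = (Y p.1 - Y' p.1) * Z (r + 1) (p.2 + m) + Y' p.1 * (Z (r + 1) (p.2 + m) - Z' (r + 1) (p.2 + m)) := by ring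
        rw [e]
        exact dvd_add (Dvd.dvd.mul_right (ih _).1 _) (Dvd.dvd.mul_left ((ih _).2 _) _)
      have hy : ∀ k, PowerSeries.X ^ (n + 1) ∣ Y k - Y' k := by
        intro k
        induction k with
        | zero => rw [a1, b1]; simp
        | succ k ihk => rw [a2, b2]; exact hz k ihk 0
      exact fun k => ⟨hy k, hz k (hy k)⟩
  ext n
  have := (PowerSeries.X_pow_dvd_iff.1 (main (n + 1) 1).1) n (Nat.lt_succ_self n)
  rw [map_sub] at this
  exact sub_eq_zero.1 this

section comb
open Polynomial
variable {R : Type*} [CommRing R]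

theorem divX_mul_twist (p q : R[X]) : divX (p * q) = divX p * q + C (p.coeff 0) * divX q := by
  conv_lhs => rw [← divX_mul_X_add p, add_mul, divX_add, divX_C_mul]
  congr 1
  ext n
  rw [coeff_divX, show divX p * X * q = (divX p * q) * X by ring, coeff_mul_X]

/-- coefficientwise `divX` -/
noncomputable def dlt : PowerSeries R[X] →+ PowerSeries R[X] where
  toFun f := PowerSeries.mk fun n => divX (PowerSeries.coeff n f)
  map_zero' := by ext n; simp
  map_add' f g := by ext1 n; simp [divX_add]

theorem coeff_dlt (f : PowerSeries R[X]) (n : ℕ) :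
    PowerSeries.coeff n (dlt f) = divX (PowerSeries.coeff n f) := by
  simp [dlt]

theorem dlt_mul (f g : PowerSeries R[X]) : dlt (f * g) = dlt f * g +
    PowerSeries.map C (PowerSeries.map (constantCoeff (R := R)) f) * dlt g := by
  ext1 n
  rw [map_add, coeff_dlt, PowerSeries.coeff_mul, PowerSeries.coeff_mul, PowerSeries.coeff_mul]
  have : ∀ p : R[X], divX p = divX_hom p := fun p => rfl
  rw [this, map_sum, ← Finset.sum_add_distrib]
  refine Finset.sum_congr rfl fun p _ => ?_
  rw [← this, divX_mul_twist, coeff_dlt, coeff_dlt]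
  simp

/-- The combinatorial series solve the system. -/
theorem comb_isSol (h : ℕ → R) (m : ℕ) : ∃ Y Z, IsSol PowerSeries.X (fun r => PowerSeries.C (h r)) m Y Z ∧
    Y 1 = PowerSeries.mk fun n => ∑ x ∈ Iv m 0 n, wts h 0 x.2 := by
  let Zs : ℕ → ℕ → PowerSeries R[X] := fun a r => PowerSeries.mk fun n => Zp h m a r n
  let D : PowerSeries R[X] →+ PowerSeries R[X] := (AddMonoidHom.mulLeft (Zs 0 0)).comp dlt
  have hDapp : ∀ f, D f = Zs 0 0 * dlt f := fun f => rfl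
  have hDZ : ∀ a r, D (Zs a r) = Zs (a + 1) r := by
    intro a r
    ext1 n
    rw [hDapp, PowerSeries.coeff_mul]
    simp only [Zs, PowerSeries.coeff_mk, coeff_dlt]
    rw [Zp_step, ← Finset.Nat.sum_antidiagonal_swap]
    rfl
  have hDZi : ∀ k a r, D^[k] (Zs a r) = Zs (a + k) r := by
    intro k
    induction k with
    | zero => intros; rfl
    | succ k ih => intro a r; rw [Function.iterate_succ, Function.comp, hDZ, ih]; congr 1; omega
  have hx : D (PowerSeries.C (1 + X)) = Zs 0 0 := by
    rw [hDapp]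
    have : dlt (PowerSeries.C (1 + X : R[X])) = 1 := by
      ext1 n
      rw [coeff_dlt, PowerSeries.coeff_C, PowerSeries.coeff_one]
      split_ifs
      · have := divX_mul_one_add (1 : R[X]); simpa using this
      · simp
    rw [this, mul_one]
  have sol := isSol_of_twisted (PowerSeries.map (constantCoeff (R := R))) (PowerSeries.map (C (R := R))) D
    (by intro k; ext n; simp)
    (by intro k; rw [hDapp]; convert mul_zero _; ext1 n; rw [coeff_dlt]; simp)
    (by intro a b; rw [hDapp, dlt_mul, hDapp, hDapp]; ring)
    PowerSeries.X (fun r => PowerSeries.C (h r)) m (PowerSeries.C (1 + X)) (fun r => Zs 0 r)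
    (by ext n; simp [PowerSeries.coeff_C, PowerSeries.coeff_one])
    hx
    (by
      intro r
      rw [hDZi]
      ext1 n
      rw [map_add]
      simp only [PowerSeries.map_C, PowerSeries.map_X]
      rw [← map_mul (PowerSeries.C (R := R[X]))]
      cases n with
      | zero => simp [Zs, Zp_zero]
      | succ n =>
        rw [PowerSeries.coeff_succ_X_mul, PowerSeries.coeff_C_mul, PowerSeries.coeff_C]
        simp [Zs, Zp_succ])
  refine ⟨_, _, sol, ?_⟩
  simp only [Function.iterate_one, hx]
  ext n
  simp [Zs, Zp, Polynomial.coeff_zero_eq_eval_zero, eval_finset_sum]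

end comb
end TI

namespace TI
open Polynomial

section rs
universe u
variable {A : Type u} [CommRing A]

/-- resultant against a monic polynomial of degree `d` -/
noncomputable def rs (f : A[X]) (d : ℕ) (g : A[X]) : A := resultant f g d g.natDegree

theorem rs_eq {f : A[X]} {d : ℕ} (hf : f.coeff d = 1) {g : A[X]} {n : ℕ} (hn : g.natDegree ≤ n) :
    resultant f g d n = rs f d g := by
  obtain ⟨k, rfl⟩ := Nat.exists_eq_add_of_le hn
  rw [resultant_add_right_deg _ _ _ _ _ le_rfl, hf, one_pow, one_mul, rs]

theorem rs_map {B : Type*} [CommRing B] (φ : A →+* B) {f : A[X]} {d : ℕ} (hf : f.coeff d = 1) (g : A[X]) :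
    φ (rs f d g) = rs (f.map φ) d (g.map φ) := by
  rw [← rs_eq (f := f.map φ) (by rw [coeff_map, hf, map_one]) (g := g.map φ) (natDegree_map_le (p := g)),
    resultant_map_map, rs]

theorem rs_mul {f : A[X]} {d : ℕ} (hf : f.coeff d = 1) (hd : f.natDegree ≤ d) (g₁ g₂ : A[X]) :
    rs f d (g₁ * g₂) = rs f d g₁ * rs f d g₂ := by
  rw [← rs_eq hf natDegree_mul_le, resultant_mul_right _ _ _ _ hd, rs, rs]

theorem rs_C_mul {f : A[X]} {d : ℕ} (hf : f.coeff d = 1) (r : A) (g : A[X]) :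
    rs f d (C r * g) = r ^ d * rs f d g := by
  rw [← rs_eq hf (natDegree_C_mul_le r g), resultant_C_mul_right, rs]

theorem rs_X_sub_C {f : A[X]} {d : ℕ} (hf : f.coeff d = 1) (hd : f.natDegree ≤ d) (r : A) :
    rs f d (X - C r) = (-1) ^ d * eval r f := by
  rw [← rs_eq hf (natDegree_X_sub_C_le r), resultant_X_sub_C_right _ _ _ hd]

theorem rs_root {f : A[X]} {d : ℕ} (hf : f.coeff d = 1) (hd : f.natDegree ≤ d) (hd0 : d ≠ 0) (g : A[X])
    {W : Type*} [CommRing W] (φ : A →+* W) (u : W) (h1 : eval₂ φ u f = 0) (h2 : eval₂ φ u g = 0) :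
    φ (rs f d g) = 0 := by
  obtain ⟨p, q, -, -, h⟩ := exists_mul_add_mul_eq_C_resultant f g hd (le_refl g.natDegree) (Or.inl hd0)
  have := congrArg (eval₂ φ u) h
  rw [eval₂_add, eval₂_mul, eval₂_mul, h1, h2, zero_mul, zero_mul, zero_add, eval₂_C] at this
  rw [rs, this]

theorem coeff_of_laurent (p p' : A[X]) (d : ℕ)
    (h : toLaurent p = LaurentPolynomial.T d * LaurentPolynomial.invert (toLaurent p')) (j : ℕ) :
    p.coeff j = if j ≤ d then p'.coeff (d - j) else 0 := by
  have h2 : toLaurent (p * X ^ p'.natDegree) = toLaurent (p'.reverse * X ^ d) := by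
    rw [map_mul, map_mul, toLaurent_X_pow, toLaurent_X_pow, LaurentPolynomial.toLaurent_reverse, h]
    ring
  have h3 := toLaurent_injective h2
  have h4 := congrArg (fun q => coeff q (j + p'.natDegree)) h3
  simp only [coeff_mul_X_pow] at h4
  rw [h4, coeff_mul_X_pow']
  split_ifs with c1 c2 c2
  · rw [coeff_reverse, revAt_le (by omega)]; congr 1; omega
  · rw [coeff_reverse]
    apply coeff_eq_zero_of_natDegree_lt
    rw [revAt_eq_self_of_lt (by omega)]; omega
  · symm; apply coeff_eq_zero_of_natDegree_lt; omega
  · rfl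

/-- Pencil resultant. -/
theorem pencil {f : A[X]} {d : ℕ} (hf : f.coeff d = 1) (hd : f.natDegree ≤ d) (hd0 : d ≠ 0) (q : A[X]) :
    ∃ χ : ℕ → A, χ d = (-1) ^ d * f.coeff 0 ∧ χ 0 = (-1) ^ d * rs f d q ∧
      ∀ (W : Type u) [CommRing W] (φ : A →+* W) (u y : W), eval₂ φ u f = 0 →
        y * u = eval₂ φ u q → ∑ j ∈ Finset.range (d + 1), φ (χ j) * y ^ j = 0 := by
  have hfC : (f.map (C : A →+* A[X])).coeff d = 1 := by rw [coeff_map, hf, map_one]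
  have hdC : (f.map (C : A →+* A[X])).natDegree ≤ d := (natDegree_map_le (p := f)).trans hd
  let g1 : A[X][X] := C X * X - q.map C
  let g2 : A[X][X] := X - C X * q.map C
  let P := rs (f.map C) d g1
  let P' := rs (f.map C) d g2
  have hL : toLaurent P = LaurentPolynomial.T d * LaurentPolynomial.invert (toLaurent P') := by
    rw [rs_map _ hfC]
    let inv : LaurentPolynomial A →+* LaurentPolynomial A := (LaurentPolynomial.invert (R := A)).toRingEquiv.toRingHom
    have hinv : ∀ a, LaurentPolynomial.invert a = inv a := fun a => rfl
    rw [hinv, ← RingHom.comp_apply, rs_map _ hfC]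
    have e0 : (toLaurent (R := A)).comp C = LaurentPolynomial.C := by ext a; simp
    have e0' : (inv.comp (toLaurent (R := A))).comp C = LaurentPolynomial.C := by
      ext1 a; simp [inv]
    have e1 : inv (LaurentPolynomial.T 1) = LaurentPolynomial.T (-1) := by
      rw [← hinv]; simp
    simp only [g1, g2, Polynomial.map_sub, Polynomial.map_mul, map_C, map_X, map_map, e0, e0',
      RingHom.comp_apply, toLaurent_X, e1]
    rw [show (LaurentPolynomial.T (d : ℤ) : LaurentPolynomial A) = (LaurentPolynomial.T 1) ^ d by
      rw [LaurentPolynomial.T_pow]; simp]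
    rw [← rs_C_mul (by rw [coeff_map, hf, map_one]), mul_sub, ← mul_assoc, ← C_mul, ← LaurentPolynomial.T_add]
    simp
  have hco := coeff_of_laurent P P' d hL
  have ev0 : ∀ p : A[X][X], (p.map (evalRingHom (0:A))).natDegree ≤ p.natDegree := fun p => natDegree_map_le
  have hcomp : (evalRingHom (0:A)).comp C = RingHom.id A := by ext; simp
  refine ⟨fun j => P.coeff j, ?_, ?_, ?_⟩
  · simp only
    rw [hco, if_pos le_rfl, Nat.sub_self, coeff_zero_eq_eval_zero, ← coe_evalRingHom, rs_map _ hfC]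
    simp only [g2, Polynomial.map_sub, Polynomial.map_mul, map_C, map_X, map_map, hcomp, map_id]
    rw [show (X - C ((evalRingHom (0:A)) X) * q : A[X]) = X - C 0 by simp, rs_X_sub_C hf hd, coeff_zero_eq_eval_zero]
  · simp only
    rw [coeff_zero_eq_eval_zero, ← coe_evalRingHom, rs_map _ hfC]
    simp only [g1, Polynomial.map_sub, Polynomial.map_mul, map_C, map_X, map_map, hcomp, map_id]
    rw [show (C ((evalRingHom (0:A)) X) * X - q : A[X]) = C (-1) * q by simp, rs_C_mul hf]
  · intro W _ φ u y h1 h2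
    have h := rs_root hfC hdC hd0 g1 (eval₂RingHom φ y) u (by
        rw [eval₂_map]; convert h1; ext; simp) (by
        simp only [g1, eval₂_sub, eval₂_mul, eval₂_C, eval₂_X, eval₂_map, coe_eval₂RingHom]
        rw [h2, sub_eq_zero]; congr 1; ext; simp)
    change eval₂ φ y P = 0 at h
    rw [eval₂_eq_sum_range' φ (n := d + 1)] at h
    · exact h
    · rw [Nat.lt_succ_iff, natDegree_le_iff_coeff_eq_zero]
      intro k hk
      rw [hco, if_neg (by omega)]

end rs
end TI

namespace TI
open Polynomial

section lau
universe u
variable {R : Type u} [CommRing R]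

/-- `u ↦ T` -/
noncomputable def iu : R[X] →+* LaurentPolynomial R := toLaurent
/-- `v ↦ T⁻¹` -/
noncomputable def iv : R[X] →+* LaurentPolynomial R :=
  (LaurentPolynomial.invert (R := R)).toRingEquiv.toRingHom.comp toLaurent

/-- the element `θ` -/
noncomputable def th (R : Type u) [CommRing R] (m : ℕ) : LaurentPolynomial R :=
  iu ((1 + X) ^ (m + 1)) * LaurentPolynomial.T (-(m:ℤ))

/-- evaluation at `θ` -/
noncomputable def evth (m : ℕ) : R[X] →+* LaurentPolynomial R :=
  eval₂RingHom LaurentPolynomial.C (th R m)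

@[simp] theorem iu_X : iu (X : R[X]) = LaurentPolynomial.T 1 := toLaurent_X
@[simp] theorem iu_C (r : R) : iu (C r) = LaurentPolynomial.C r := toLaurent_C r
@[simp] theorem iv_X : iv (X : R[X]) = LaurentPolynomial.T (-1) := by
  show LaurentPolynomial.invert (toLaurent X) = _
  simp
@[simp] theorem iv_C (r : R) : iv (C r) = LaurentPolynomial.C r := by
  show LaurentPolynomial.invert (toLaurent (C r)) = _
  simp
@[simp] theorem evth_X (m : ℕ) : evth m (X : R[X]) = th R m := by simp [evth]
@[simp] theorem evth_C (m : ℕ) (r : R) : evth m (C r) = LaurentPolynomial.C r := by simp [evth]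

theorem iu_inj : Function.Injective (iu (R := R)) := toLaurent_injective
theorem iv_inj : Function.Injective (iv (R := R)) :=
  (LaurentPolynomial.invert (R := R)).injective.comp toLaurent_injective

theorem T_mul_inv : (LaurentPolynomial.T 1 * LaurentPolynomial.T (-1) : LaurentPolynomial R) = 1 := by
  rw [← LaurentPolynomial.T_add]; simp

theorem T_neg_nat (m : ℕ) : (LaurentPolynomial.T (-(m:ℤ)) : LaurentPolynomial R) = LaurentPolynomial.T (-1) ^ m := by
  rw [LaurentPolynomial.T_pow]; simp

theorem iu_iv_one : iu (1 + X : R[X]) = LaurentPolynomial.T 1 * iv (1 + X) := by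
  rw [map_add, map_add, mul_add, iu_X, iv_X, T_mul_inv, map_one, map_one]; ring

theorem th_eq (m : ℕ) : th R m = LaurentPolynomial.T 1 * iv (1 + X) ^ (m + 1) := by
  rw [th, map_pow, iu_iv_one, T_neg_nat, mul_pow, pow_succ (LaurentPolynomial.T 1)]
  calc _ = (LaurentPolynomial.T 1 * LaurentPolynomial.T (-1))^m * (LaurentPolynomial.T 1 * (iv (1 + X) : LaurentPolynomial R) ^ (m + 1)) := by rw [mul_pow]; ring
    _ = _ := by rw [T_mul_inv]; simp

theorem evth_eq_iv {m : ℕ} {p r : R[X]} (h : evth m p = iv r) : p = C (r.coeff 0) := by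
  have key : ∀ d, d = p.natDegree → ∑ j ∈ Finset.range (d + 1), C (p.coeff j) * X ^ (d - j) * (1 + X) ^ ((m + 1) * j) = X ^ d * r := by
    intro d hd
    apply iv_inj
    rw [map_mul, ← h, evth, coe_eval₂RingHom, eval₂_eq_sum_range, ← hd, map_sum, Finset.mul_sum]
    refine Finset.sum_congr rfl fun j hj => ?_
    have hj : j ≤ d := by simpa [Nat.lt_succ_iff] using hj
    simp only [map_mul, map_pow, iv_X, iv_C, th_eq]
    obtain ⟨k, rfl⟩ := Nat.exists_eq_add_of_le hj
    rw [Nat.add_sub_cancel_left, mul_pow, ← pow_mul, pow_add]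
    calc _ = LaurentPolynomial.C (p.coeff j) * LaurentPolynomial.T (-1) ^ k * (iv (1 + X) : LaurentPolynomial R) ^ ((m + 1) * j) * (LaurentPolynomial.T 1 * LaurentPolynomial.T (-1))^j := by
            rw [T_mul_inv]; simp
      _ = _ := by rw [mul_pow]; ring
  have key2 := congrArg (fun q => coeff q 0) (key _ rfl)
  simp only [finset_sum_coeff, mul_coeff_zero] at key2
  rw [Finset.sum_eq_single p.natDegree] at key2
  · simp [coeff_zero_eq_eval_zero] at key2
    by_cases hd : p.natDegree = 0
    · rw [eq_C_of_natDegree_eq_zero hd]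
      simp [hd] at key2
      simpa [coeff_zero_eq_eval_zero, leadingCoeff, hd] using key2
    · rw [zero_pow hd, zero_mul, leadingCoeff_eq_zero] at key2
      simp [key2] at hd
  · intro j hj hne
    have : j < p.natDegree := by have := Finset.mem_range.1 hj; omega
    rw [show (X ^ (p.natDegree - j) : R[X]).coeff 0 = 0 by
      rw [coeff_X_pow, if_neg (by omega)]]
    simp
  · simp

/-- twisted derivation -/
noncomputable def DG (G : R[X]) : R[X] →+ R[X] where
  toFun p := divX p * (1 + X) * G
  map_zero' := by simp
  map_add' p q := by rw [divX_add]; ring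

theorem iu_DG (G p : R[X]) : iu (DG G p) = (iu p - LaurentPolynomial.C (p.coeff 0)) * (iv (1 + X) * iu G) := by
  show iu (divX p * (1 + X) * G) = _
  conv_rhs => rw [← divX_mul_X_add p]
  rw [map_mul, map_mul, iu_iv_one]
  simp
  ring

end lau
end TI

namespace TI
open Polynomial

section key
universe u
variable {R : Type u} [CommRing R]

/-- defining polynomial of `u` over `R[θ]` -/
noncomputable def ff (R : Type u) [CommRing R] (m : ℕ) : R[X][X] := (1 + X) ^ (m + 1) - C X * X ^ m

theorem ff_deg (m : ℕ) : (ff R m).natDegree ≤ m + 1 := by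
  unfold ff
  compute_degree

theorem ff_coeff (m : ℕ) : (ff R m).coeff (m + 1) = 1 := by
  rw [ff, coeff_sub, coeff_one_add_X_pow, coeff_C_mul, coeff_X_pow]; simp

theorem ff_coeff_zero {m : ℕ} (hm : 1 ≤ m) : (ff R m).coeff 0 = 1 := by
  rw [ff, coeff_sub, coeff_one_add_X_pow, coeff_C_mul, coeff_X_pow, if_neg (by omega)]; simp

theorem ff_root (m : ℕ) : eval₂ (evth m) (LaurentPolynomial.T 1) (ff R m) = 0 := by
  rw [ff, eval₂_sub, eval₂_mul, eval₂_pow, eval₂_pow, eval₂_C, evth_X, eval₂_add, eval₂_one, eval₂_X, th, T_neg_nat]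
  rw [mul_assoc, ← mul_pow, mul_comm (LaurentPolynomial.T (-1)), T_mul_inv]
  simp

/-- the cofactor -/
noncomputable def kv (R : Type u) [CommRing R] (m : ℕ) : R[X][X] :=
  X ^ m - ∑ i ∈ Finset.range m, (((m + 1).choose i : ℕ) : R[X][X]) *
    ∑ a ∈ Finset.range (m - i), C (X ^ (a + 1)) * X ^ (i + a)

theorem kv_sub_coeff (m k : ℕ) (hk : m ≤ k) : (∑ i ∈ Finset.range m, (((m + 1).choose i : ℕ) : R[X][X]) *
    ∑ a ∈ Finset.range (m - i), C (X ^ (a + 1)) * X ^ (i + a)).coeff k = 0 := by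
  rw [finsetSum_coeff]
  refine Finset.sum_eq_zero fun i hi => ?_
  rw [← C_eq_natCast, coeff_C_mul, finsetSum_coeff, Finset.sum_eq_zero, mul_zero]
  intro a ha
  rw [coeff_C_mul, coeff_X_pow, if_neg, mul_zero]
  have := Finset.mem_range.1 ha
  omega

theorem kv_coeff (m : ℕ) : (kv R m).coeff m = 1 := by
  rw [kv, coeff_sub, kv_sub_coeff _ _ le_rfl]; simp

theorem kv_deg (m : ℕ) : (kv R m).natDegree ≤ m := by
  rw [natDegree_le_iff_coeff_eq_zero]
  intro k hk
  rw [kv, coeff_sub, kv_sub_coeff _ _ (by omega), coeff_X_pow, if_neg (by omega), sub_zero]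

theorem kv_zero (m : ℕ) : (kv R m).map (evalRingHom 0) = X ^ m := by
  rw [kv, Polynomial.map_sub, Polynomial.map_sum, Finset.sum_eq_zero, Polynomial.map_pow, map_X, sub_zero]
  intro i _
  rw [Polynomial.map_mul, Polynomial.map_sum, Finset.sum_eq_zero, mul_zero]
  intro a _
  simp

theorem factor_aux {S : Type*} [CommRing S] (v w x : S) (hvu : v * w = 1) (m : ℕ) :
    (1 + x) ^ (m + 1) - (1 + w) ^ (m + 1) * v ^ m * x ^ m =
    (x - w) * (x ^ m - ∑ i ∈ Finset.range m, (((m + 1).choose i : ℕ) : S) *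
    ∑ a ∈ Finset.range (m - i), v ^ (a + 1) * x ^ (i + a)) := by
  have hp : ∀ k, w ^ k * v ^ k = 1 := fun k => by rw [← mul_pow, mul_comm, hvu, one_pow]
  have hth : (1 + w) ^ (m + 1) * v ^ m = w + ((m + 1).choose m : ℕ) + ∑ i ∈ Finset.range m, ((m + 1).choose i : ℕ) * v ^ (m - i) := by
    rw [add_comm 1 w, add_pow, Finset.sum_range_succ, Finset.sum_range_succ]
    rw [add_mul, add_mul, Finset.sum_mul, add_assoc, add_comm]
    congr 1
    · simp only [one_pow, mul_one, Nat.choose_self, Nat.cast_one]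
      rw [pow_succ]
      linear_combination (((m + 1).choose m : ℕ) + w) * hp m
    · refine Finset.sum_congr rfl fun i hi => ?_
      have : i < m := Finset.mem_range.1 hi
      obtain ⟨k, rfl⟩ := Nat.exists_eq_add_of_lt this
      rw [show i + k + 1 = i + (k+1) by ring, Nat.add_sub_cancel_left, pow_add]
      simp only [one_pow, mul_one]
      linear_combination (v^(k+1) * ((i + (k+1) + 1).choose i : ℕ)) * hp i
  have tel : ∀ k i : ℕ, (x - w) * ∑ a ∈ Finset.range k, v ^ (a + 1) * x ^ (i + a) = x ^ i * ((v * x) ^ k - 1) := by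
    intro k i
    induction k with
    | zero => simp
    | succ k ih =>
      rw [Finset.sum_range_succ, mul_add, ih, pow_succ (v * x), mul_pow]
      linear_combination (-(v^k * x^i * x^k)) * hvu
  rw [hth, mul_sub, Finset.mul_sum]
  simp only [mul_left_comm (x - w), tel]
  rw [add_comm 1 x, add_pow, Finset.sum_range_succ, Finset.sum_range_succ]
  simp only [one_pow, mul_one, Nat.choose_self, Nat.cast_one]
  have : ∑ i ∈ Finset.range m, (((m + 1).choose i : ℕ) : S) * (x ^ i * ((v * x) ^ (m - i) - 1))
      = (∑ i ∈ Finset.range m, ((m + 1).choose i : ℕ) * v ^ (m - i)) * x ^ m - ∑ i ∈ Finset.range m, x ^ i * (((m + 1).choose i : ℕ) : S) := by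
    rw [Finset.sum_mul, ← Finset.sum_sub_distrib]
    refine Finset.sum_congr rfl fun i hi => ?_
    have : i < m := Finset.mem_range.1 hi
    obtain ⟨k, rfl⟩ := Nat.exists_eq_add_of_lt this
    rw [show i + k + 1 = i + (k+1) by ring, Nat.add_sub_cancel_left]
    ring
  rw [this]
  ring

theorem ff_factor (m : ℕ) : (ff R m).map (evth m) = (X - C (LaurentPolynomial.T 1)) * (kv R m).map iv := by
  have hvu : (C (LaurentPolynomial.T (-1)) * C (LaurentPolynomial.T 1) : (LaurentPolynomial R)[X]) = 1 := by
    rw [← C_mul, mul_comm, T_mul_inv, C_1]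
  have h := factor_aux _ _ (X : (LaurentPolynomial R)[X]) hvu m
  have hk : (kv R m).map iv = X ^ m - ∑ i ∈ Finset.range m, (((m + 1).choose i : ℕ) : (LaurentPolynomial R)[X]) *
    ∑ a ∈ Finset.range (m - i), C (LaurentPolynomial.T (-1)) ^ (a + 1) * X ^ (i + a) := by
    simp only [kv, Polynomial.map_sum, Polynomial.map_sub, Polynomial.map_mul, Polynomial.map_pow, map_X,
      Polynomial.map_natCast, map_C, map_pow, iv_X]
  rw [hk, ← h, ff, Polynomial.map_sub, Polynomial.map_mul, Polynomial.map_pow, Polynomial.map_pow, map_C, evth_X,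
    th, T_neg_nat, C_mul, C_pow, map_pow, C_pow, map_add, map_one, iu_X, C_add, C_1, Polynomial.map_add,
    Polynomial.map_one, map_X]

theorem rs_ff_G [Nontrivial R] (m : ℕ) (G : R[X]) :
    evth m (rs (ff R m) (m + 1) (G.map C)) = iu G * iv (rs (kv R m) m (G.map C)) := by
  rw [rs_map _ (ff_coeff m), rs_map _ (kv_coeff m)]
  have e1 : (evth m).comp (C : R →+* R[X]) = LaurentPolynomial.C := by ext1 a; simp
  have e2 : (iv).comp (C : R →+* R[X]) = LaurentPolynomial.C := by ext1 a; simp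
  rw [map_map, map_map, e1, e2, ff_factor]
  set k := (kv R m).map iv
  have hkc : k.coeff m = 1 := by rw [coeff_map, kv_coeff, map_one]
  have hkd : k.natDegree = m := natDegree_eq_of_le_of_coeff_ne_zero
    (natDegree_map_le.trans (kv_deg m)) (by rw [hkc]; exact one_ne_zero)
  rw [rs, rs]
  have := resultant_mul_left (X - C (LaurentPolynomial.T 1)) k (G.map LaurentPolynomial.C) _ le_rfl
  rw [natDegree_X_sub_C, hkd, add_comm 1 m, resultant_X_sub_C_left _ _ _ le_rfl] at this
  rw [this]
  congr 1
  rw [eval_map]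
  conv_rhs => rw [as_sum_range_C_mul_X_pow G, map_sum]
  rw [eval₂_eq_sum_range]
  simp

theorem N0_eq [Nontrivial R] (m : ℕ) {G H Hi K Ki : R[X]} (hH : H * Hi = 1) (hK : K * Ki = 1)
    (hK0 : K.coeff 0 = 1) (hGH : evth m H = iu G * iv K) :
    rs (ff R m) (m + 1) (G.map C) = C (G.coeff 0 ^ m) * H := by
  have h0 : (rs (kv R m) m (G.map C)).coeff 0 = G.coeff 0 ^ m := by
    rw [coeff_zero_eq_eval_zero, ← coe_evalRingHom, rs_map _ (kv_coeff m), kv_zero, map_map,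
      show (evalRingHom (0:R)).comp C = RingHom.id R by ext; simp, map_id, rs, resultant_X_pow_left _ _ _ le_rfl]
  have hKi : Ki.coeff 0 = 1 := by
    have := congrArg (fun q => coeff q 0) hK
    simpa [hK0] using this
  have h1 : iu G * evth m Hi = iv Ki := by
    have a1 : iu G * iv K * evth m Hi = 1 := by rw [← hGH, ← map_mul, hH, map_one]
    have a2 : iv K * iv Ki = (1 : LaurentPolynomial R) := by rw [← map_mul, hK, map_one]
    linear_combination (iv Ki) * a1 - (iu G * evth m Hi) * a2
  have h2 : evth m (rs (ff R m) (m + 1) (G.map C) * Hi) = iv (rs (kv R m) m (G.map C) * Ki) := by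
    rw [map_mul, rs_ff_G, map_mul, ← h1]; ring
  have h3 := evth_eq_iv h2
  rw [mul_coeff_zero, h0, hKi, mul_one] at h3
  rw [← h3, mul_assoc, mul_comm Hi, hH, mul_one]

end key
end TI

namespace TI
open Polynomial

section key2
universe u
variable {R : Type u} [CommRing R]

theorem ps_vanish (m : ℕ) (a : ℕ → R) (g : PowerSeries R) (gi : R) (hg : PowerSeries.constantCoeff g * gi = 1)
    (h : PowerSeries.X ^ (m + 1) ∣ ∑ j ∈ Finset.range (m + 1), PowerSeries.C (a j) * (PowerSeries.X * g) ^ j) :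
    ∀ j ≤ m, a j = 0 := by
  intro k
  induction k using Nat.strong_induction_on with
  | _ k ih =>
    intro hk
    have h1 := PowerSeries.X_pow_dvd_iff.1 h k (by omega)
    rw [map_sum, Finset.sum_eq_single k] at h1
    · rw [mul_pow, PowerSeries.coeff_C_mul, PowerSeries.coeff_X_pow_mul', if_pos le_rfl, Nat.sub_self,
        PowerSeries.coeff_zero_eq_constantCoeff_apply, map_pow] at h1
      calc a k = a k * (PowerSeries.constantCoeff g * gi) ^ k := by rw [hg]; simp
        _ = (a k * PowerSeries.constantCoeff g ^ k) * gi ^ k := by ring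
        _ = 0 := by rw [h1, zero_mul]
    · intro j hj hne
      rcases lt_or_gt_of_ne hne with c | c
      · rw [ih j c (by omega)]; simp
      · rw [mul_pow, PowerSeries.coeff_C_mul, PowerSeries.coeff_X_pow_mul', if_neg (by omega), mul_zero]
    · intro h; exact absurd (Finset.mem_range.2 (by omega)) h

theorem chi_zero (m : ℕ) {G Gi : R[X]} (hG : G * Gi = 1) (χ : ℕ → R[X])
    (h : ∀ (W : Type u) [CommRing W] (φ : R[X] →+* W) (u y : W), eval₂ φ u (ff R m) = 0 →
        y * u = eval₂ φ u ((1 + X) * G.map C) → ∑ j ∈ Finset.range (m + 2), φ (χ j) * y ^ j = 0) :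
    ∀ j ≤ m, (χ j).coeff 0 = 0 := by
  let s : PowerSeries R := PowerSeries.X
  let w : PowerSeries R := s - 1
  obtain ⟨wi, hw⟩ : ∃ wi, w * wi = 1 := ⟨-(PowerSeries.mk 1), by
    have := PowerSeries.mk_one_mul_one_sub_eq_one R
    linear_combination this⟩
  let φ : R[X] →+* PowerSeries R := eval₂RingHom PowerSeries.C (s ^ (m + 1) * wi ^ m)
  have hs : 1 + w = s := by simp [w]
  have hφC : φ.comp C = PowerSeries.C := by ext1 a; simp [φ]
  have h1 : eval₂ φ w (ff R m) = 0 := by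
    have e : w ^ m * wi ^ m = 1 := by rw [← mul_pow, hw, one_pow]
    simp only [ff, eval₂_sub, eval₂_mul, eval₂_pow, eval₂_add, eval₂_one, eval₂_X, eval₂_C, hs]
    simp only [φ, coe_eval₂RingHom, eval₂_X]
    linear_combination (-s ^ (m+1)) * e
  let g0 : PowerSeries R := eval₂ PowerSeries.C w G
  let g0i : PowerSeries R := eval₂ PowerSeries.C w Gi
  have hg0 : g0 * g0i = 1 := by
    simp only [g0, g0i]; rw [← eval₂_mul, hG, eval₂_one]
  have h2 : (s * (g0 * wi)) * w = eval₂ φ w ((1 + X) * G.map C) := by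
    rw [eval₂_mul, eval₂_map, hφC, eval₂_add, eval₂_one, eval₂_X, hs]
    linear_combination (s * g0) * hw
  have h3 := h _ φ w _ h1 h2
  apply ps_vanish m _ (g0 * wi) (PowerSeries.constantCoeff (w * g0i))
  · rw [← map_mul, show g0 * wi * (w * g0i) = (w * wi) * (g0 * g0i) by ring, hg0, hw]; simp
  · rw [Finset.sum_range_succ] at h3
    have hd : ∀ j, s ^ (m + 1) ∣ φ (χ j) - PowerSeries.C ((χ j).coeff 0) := by
      intro j
      conv => rhs; rw [← divX_mul_X_add (χ j)]
      rw [map_add, map_mul]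
      simp only [φ, coe_eval₂RingHom, eval₂_X, eval₂_C]
      refine ⟨eval₂ PowerSeries.C (s ^ (m + 1) * wi ^ m) (χ j).divX * wi ^ m, ?_⟩
      simp
      ring
    have e : ∑ j ∈ Finset.range (m + 1), PowerSeries.C ((χ j).coeff 0) * (PowerSeries.X * (g0 * wi)) ^ j =
      - (∑ j ∈ Finset.range (m + 1), (φ (χ j) - PowerSeries.C ((χ j).coeff 0)) * (s * (g0 * wi)) ^ j)
       - φ (χ (m + 1)) * (s * (g0 * wi)) ^ (m + 1) := by
      rw [eq_sub_iff_add_eq, eq_neg_iff_add_eq_zero, ← h3]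
      simp only [sub_mul, Finset.sum_sub_distrib]
      ring
    rw [e]
    apply dvd_sub
    · apply (dvd_neg).2
      exact Finset.dvd_sum fun j _ => Dvd.dvd.mul_right (hd j) _
    · rw [mul_pow]
      exact ⟨φ (χ (m + 1)) * (g0 * wi) ^ (m + 1), by ring⟩

/-- the element `Y` -/
noncomputable def yy (G : R[X]) : LaurentPolynomial R := iv (1 + X) * iu G

theorem key_rel [Nontrivial R] {m : ℕ} (hm : 1 ≤ m) {G Gi H Hi K Ki : R[X]} (hG : G * Gi = 1) (hH : H * Hi = 1) (hK : K * Ki = 1)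
    (hK0 : K.coeff 0 = 1) (hGH : evth m H = iu G * iv K) :
    ∃ d : ℕ → R[X], yy G ^ (m + 1) + th R m * ∑ j ∈ Finset.range m, evth m (d j) * yy G ^ (j + 1)
      + th R m * (LaurentPolynomial.C (G.coeff 0 ^ m) * evth m H) = 0 := by
  obtain ⟨χ, h1, h2, h3⟩ := pencil (ff_coeff (R := R) m) (ff_deg m) (by omega) ((1 + X) * G.map C)
  have h4 := chi_zero m hG χ h3
  rw [ff_coeff_zero hm, mul_one] at h1
  rw [rs_mul (ff_coeff m) (ff_deg m), N0_eq m hH hK hK0 hGH, show (1 + X : R[X][X]) = X - C (-1) by simp; ring,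
    rs_X_sub_C (ff_coeff m) (ff_deg m)] at h2
  have hev : eval (-1) (ff R m) = (-1) ^ (m + 1) * X := by
    simp [ff]; ring
  have sg : ((-1) ^ (m + 1) * (-1) ^ (m + 1) : LaurentPolynomial R) = 1 := by
    rw [← mul_pow]; simp
  have h5 := h3 _ (evth m) (LaurentPolynomial.T 1) (yy G) (ff_root m) (by
    rw [eval₂_mul, eval₂_map, show (evth m).comp (C : R →+* R[X]) = LaurentPolynomial.C by ext1 a; simp]
    have e : eval₂ LaurentPolynomial.C (LaurentPolynomial.T 1) G = iu G := by
      conv_rhs => rw [as_sum_range_C_mul_X_pow G, map_sum]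
      rw [eval₂_eq_sum_range]
      simp
    have e2 : eval₂ (evth m) (LaurentPolynomial.T 1) (1 + X) = iu (1 + X : R[X]) := by simp
    rw [e, e2, iu_iv_one, yy]; ring)
  rw [Finset.sum_range_succ, Finset.sum_range_succ', h1, h2, hev] at h5
  refine ⟨fun j => (-1) ^ (m + 1) * (χ (j + 1)).divX, ?_⟩
  have h6 : ∑ j ∈ Finset.range m, evth m (χ (j + 1)) * yy G ^ (j + 1) = th R m * ((-1)^(m+1) * ∑ j ∈ Finset.range m,
     evth m ((-1) ^ (m + 1) * (χ (j + 1)).divX) * yy G ^ (j + 1)) := by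
    rw [Finset.mul_sum, Finset.mul_sum]
    refine Finset.sum_congr rfl fun j hj => ?_
    have : χ (j + 1) = (χ (j + 1)).divX * X := by
      conv_lhs => rw [← divX_mul_X_add (χ (j + 1)), h4 _ (by have := Finset.mem_range.1 hj; omega)]
      simp
    conv_lhs => rw [this]
    simp only [map_mul, evth_X, map_pow, map_neg, map_one]
    linear_combination (- evth m (χ (j + 1)).divX * th R m * yy G ^ (j + 1)) * sg
  rw [h6] at h5
  simp only [map_mul, evth_X, evth_C, map_pow, map_neg, map_one, pow_zero, mul_one] at h5 ⊢
  generalize ∑ j ∈ Finset.range m, (-1) ^ (m + 1) * evth m (χ (j + 1)).divX * yy G ^ (j + 1) = sm at h5 ⊢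
  generalize th R m = t at *
  generalize evth m H = hh at *
  generalize yy G = y at *
  generalize LaurentPolynomial.C (G.coeff 0) ^ m = c at *
  generalize ((-1) ^ (m + 1) : LaurentPolynomial R) = e at *
  linear_combination e * h5 + (- y^(m+1) - t * sm - (e * e + 1) * t * c * hh) * sg

end key2
end TI

namespace TI
open Polynomial

section sol
universe u
variable {R : Type u} [CommRing R]

/-- basis of the module `N` -/
noncomputable def bb (m : ℕ) (G : R[X]) (i : ℕ) : LaurentPolynomial R := th R m ^ (i / m) * yy G ^ (i % m + 1)
/-- the module `N` -/
noncomputable def NN (m : ℕ) (G : R[X]) : Submodule R (LaurentPolynomial R) := Submodule.span R (Set.range (bb m G))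

theorem LC_smul (r : R) (x : LaurentPolynomial R) : LaurentPolynomial.C r * x = r • x := by
  rw [LaurentPolynomial.smul_eq_C_mul]

theorem NN_th {m : ℕ} (hm : 1 ≤ m) (G : R[X]) {x : LaurentPolynomial R} (hx : x ∈ NN m G) : th R m * x ∈ NN m G := by
  induction hx using Submodule.span_induction with
  | mem x hx =>
    obtain ⟨i, rfl⟩ := hx
    refine Submodule.subset_span ⟨i + m, ?_⟩
    simp only [bb]
    rw [Nat.add_div_right _ (by omega), Nat.add_mod_right]
    ring
  | zero => simp
  | add x y _ _ hx hy => rw [mul_add]; exact add_mem hx hy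
  | smul r x _ hx => rw [mul_smul_comm]; exact Submodule.smul_mem _ _ hx

theorem NN_ev {m : ℕ} (hm : 1 ≤ m) (G p : R[X]) {x : LaurentPolynomial R} (hx : x ∈ NN m G) : evth m p * x ∈ NN m G := by
  have hpow : ∀ k, th R m ^ k * x ∈ NN m G := by
    intro k
    induction k with
    | zero => simpa
    | succ k ih => rw [pow_succ', mul_assoc]; exact NN_th hm G ih
  rw [evth, coe_eval₂RingHom, eval₂_eq_sum_range, Finset.sum_mul]
  refine sum_mem fun i _ => ?_
  rw [mul_assoc, LC_smul]
  exact Submodule.smul_mem _ _ (hpow i)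

theorem NN_y {m : ℕ} (G : R[X]) {j : ℕ} (hj : j < m) : yy G ^ (j + 1) ∈ NN m G := by
  refine Submodule.subset_span ⟨j, ?_⟩
  simp only [bb]
  rw [Nat.div_eq_of_lt hj, Nat.mod_eq_of_lt hj]; simp

theorem bb_eq (m : ℕ) (G : R[X]) (i : ℕ) :
    LaurentPolynomial.T 1 ^ (i + 1) * bb m G i = iu ((1 + X) ^ ((m + 1) * (i / m)) * ((1 + X) * G) ^ (i % m + 1)) := by
  have hi : m * (i / m) + (i % m + 1) = i + 1 := by rw [← add_assoc, Nat.div_add_mod]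
  have h1 : LaurentPolynomial.T 1 ^ m * th R m = iu ((1 + X) ^ (m + 1)) := by
    rw [th, T_neg_nat]
    have : (LaurentPolynomial.T 1 ^ m * LaurentPolynomial.T (-1) ^ m : LaurentPolynomial R) = 1 := by
      rw [← mul_pow, T_mul_inv, one_pow]
    linear_combination iu ((1 + X) ^ (m + 1)) * this
  have h2 : LaurentPolynomial.T 1 * yy G = iu ((1 + X) * G) := by
    rw [yy, map_mul, iu_iv_one]; ring
  rw [map_mul, map_pow iu ((1 + X) * G), ← h2, pow_mul, map_pow iu ((1 + X)^(m+1)), ← h1, bb, ← hi, pow_add]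
  ring

theorem indep {m : ℕ} (hm : 1 ≤ m) {G Gi : R[X]} (hG : G * Gi = 1) (x : R[X]) (hx : x.coeff 0 = 1)
    (k : ℕ) (c : ℕ → R) (p : R[X]) (h : iu p = iu x * ∑ i ∈ Finset.range k, c i • bb m G i) : p = 0 := by
  have hG0 : G.coeff 0 * Gi.coeff 0 = 1 := by rw [← mul_coeff_zero, hG]; simp
  induction k with
  | zero => simp at h; exact iu_inj (by rw [h, map_zero])
  | succ k ih =>
    apply ih
    rw [h, Finset.sum_range_succ]
    suffices c k = 0 by rw [this]; simp
    let w : ℕ → R[X] := fun i => (1 + X) ^ ((m + 1) * (i / m)) * ((1 + X) * G) ^ (i % m + 1)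
    have h2 : X ^ (k + 1) * p = x * ∑ i ∈ Finset.range (k + 1), C (c i) * X ^ (k - i) * w i := by
      apply iu_inj
      rw [map_mul, h, map_mul, map_pow, iu_X, map_sum, mul_left_comm, Finset.mul_sum]
      congr 1
      refine Finset.sum_congr rfl fun i hi => ?_
      rw [map_mul iu (C (c i) * X ^ (k - i)), map_mul iu (C (c i))]
      simp only [w]
      rw [← bb_eq m, ← LC_smul, map_pow, iu_X, iu_C]
      obtain ⟨l, rfl⟩ := Nat.exists_eq_add_of_le (Nat.lt_succ_iff.1 (Finset.mem_range.1 hi))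
      rw [Nat.add_sub_cancel_left]; ring
    have h3 := congrArg (fun q => coeff q 0) h2
    simp only [mul_coeff_zero, finsetSum_coeff, hx] at h3
    rw [Finset.sum_eq_single k] at h3
    · have hw : (w k).coeff 0 = G.coeff 0 ^ (k % m + 1) := by
        simp [w, coeff_zero_eq_eval_zero]
      rw [hw] at h3
      simp at h3
      calc c k = c k * (G.coeff 0 * Gi.coeff 0) ^ (k % m + 1) := by rw [hG0]; simp
        _ = (c k * G.coeff 0 ^ (k % m + 1)) * Gi.coeff 0 ^ (k % m + 1) := by ring
        _ = 0 := by rw [← h3, zero_mul]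
    · intro i hi hne
      rw [coeff_X_pow, if_neg (by have := Finset.mem_range.1 hi; omega)]; simp
    · simp

theorem indep' {m : ℕ} (hm : 1 ≤ m) {G Gi : R[X]} (hG : G * Gi = 1) (x : R[X]) (hx : x.coeff 0 = 1)
    (p : R[X]) (y : LaurentPolynomial R) (hy : y ∈ NN m G) (h : iu p = iu x * y) : p = 0 := by
  obtain ⟨c, hc⟩ := (Finsupp.mem_span_range_iff_exists_finsupp).1 hy
  refine indep hm hG x hx (c.support.sup id + 1) c p ?_
  rw [h, ← hc, Finsupp.sum_of_support_subset]
  · intro i hi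
    exact Finset.mem_range.2 (Nat.lt_succ_of_le (Finset.le_sup (f := id) hi))
  · simp

/-- series `Xp` -/
noncomputable def xp (m : ℕ) (G Gi : R[X]) : R[X] := (1 + X) * Gi ^ m * C (G.coeff 0 ^ m)

/-- the operator `A` -/
noncomputable def AA (m : ℕ) (G Gi : R[X]) (s : R[X]) : R[X] := C (Gi.coeff 0 ^ m) * (xp m G Gi * (DG G)^[m] s)

variable {m : ℕ} {G Gi : R[X]} 

theorem xp_zero (hG : G * Gi = 1) : (xp m G Gi).coeff 0 = 1 := by
  have hG0 : G.coeff 0 * Gi.coeff 0 = 1 := by rw [← mul_coeff_zero, hG]; simp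
  simp only [xp, coeff_zero_eq_eval_zero] at *
  simp [← mul_pow]
  rw [mul_comm, hG0, one_pow]

theorem xp_y (hG : G * Gi = 1) : iu (xp m G Gi) * yy G ^ m = LaurentPolynomial.C (G.coeff 0 ^ m) * th R m := by
  rw [xp, yy, map_mul, map_mul, iu_C, iu_iv_one, th_eq, mul_pow, map_pow]
  have : (iu G ^ m * iu Gi ^ m : LaurentPolynomial R) = 1 := by rw [← mul_pow, ← map_mul, hG]; simp
  linear_combination (LaurentPolynomial.C (G.coeff 0 ^ m) * (LaurentPolynomial.T 1 * iv (1 + X) ^ (m + 1))) * this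

theorem iu_DG_iter (k : ℕ) (hk : k ≤ m) (s : R[X]) : iu ((DG G)^[k] s) - iu s * yy G ^ k ∈ NN m G := by
  suffices h : ∀ k s, ∃ a : ℕ → R, iu ((DG G)^[k] s) - iu s * yy G ^ k = ∑ j ∈ Finset.range k, a j • yy G ^ (j + 1) by
    obtain ⟨a, ha⟩ := h k s
    rw [ha]
    refine sum_mem fun j hj => Submodule.smul_mem _ _ (NN_y G ?_)
    have := Finset.mem_range.1 hj; omega
  clear hk k s
  intro k
  induction k with
  | zero => intro s; exact ⟨0, by simp⟩
  | succ k ih =>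
    intro s
    obtain ⟨a, ha⟩ := ih (DG G s)
    refine ⟨fun j => if j < k then a j else - s.coeff 0, ?_⟩
    rw [Function.iterate_succ_apply, Finset.sum_range_succ]
    have e : ∑ j ∈ Finset.range k, (if j < k then a j else - s.coeff 0) • yy G ^ (j + 1) = ∑ j ∈ Finset.range k, a j • yy G ^ (j + 1) :=
      Finset.sum_congr rfl fun j hj => by rw [if_pos (Finset.mem_range.1 hj)]
    rw [e, ← ha, iu_DG]
    simp only [if_neg (lt_irrefl _)]
    rw [neg_smul, ← LC_smul, yy]
    ring

theorem AA_mem (hG : G * Gi = 1) (s : R[X]) : ∃ y ∈ NN m G, iu (AA m G Gi s) - th R m * iu s = iu (xp m G Gi) * y := by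
  refine ⟨Gi.coeff 0 ^ m • (iu ((DG G)^[m] s) - iu s * yy G ^ m), Submodule.smul_mem _ _ (iu_DG_iter m le_rfl s), ?_⟩
  rw [AA, map_mul, map_mul, ← LC_smul, iu_C]
  have h := xp_y (m := m) hG
  have hG0 : LaurentPolynomial.C (G.coeff 0 ^ m) * LaurentPolynomial.C (Gi.coeff 0 ^ m) = 1 := by
    rw [← map_mul, ← mul_pow, ← mul_coeff_zero, hG]; simp
  linear_combination LaurentPolynomial.C (Gi.coeff 0 ^ m) * iu s * h + th R m * iu s * hG0

theorem AA_iter (hm : 1 ≤ m) (hG : G * Gi = 1) (i : ℕ) : ∃ y ∈ NN m G,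
    iu ((AA m G Gi)^[i] (xp m G Gi)) - th R m ^ i * iu (xp m G Gi) = iu (xp m G Gi) * y := by
  induction i with
  | zero => exact ⟨0, zero_mem _, by simp⟩
  | succ i ih =>
    obtain ⟨y, hy, h⟩ := ih
    obtain ⟨y', hy', h'⟩ := AA_mem (m := m) hG ((AA m G Gi)^[i] (xp m G Gi))
    refine ⟨y' + th R m * y, add_mem hy' (NN_th hm G hy), ?_⟩
    rw [Function.iterate_succ_apply', mul_add, ← h']
    linear_combination th R m * h

theorem th_cancel {a b : LaurentPolynomial R} (h : th R m * a = th R m * b) : a = b := by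
  have h1 : iu ((1 + X) ^ (m + 1)) * a = iu ((1 + X) ^ (m + 1)) * b := by
    have : (LaurentPolynomial.T 1 ^ m * LaurentPolynomial.T (-1) ^ m : LaurentPolynomial R) = 1 := by
      rw [← mul_pow, T_mul_inv, one_pow]
    rw [th, T_neg_nat] at h
    linear_combination LaurentPolynomial.T 1 ^ m * h - (iu ((1 + X) ^ (m + 1)) * (a - b)) * this
  obtain ⟨n1, a', ha⟩ := LaurentPolynomial.exists_T_pow (a - b)
  have h2 : (1 + X) ^ (m + 1) * a' = 0 := by
    apply iu_inj
    rw [map_mul, map_zero]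
    show _ * toLaurent a' = 0
    rw [ha]
    linear_combination LaurentPolynomial.T n1 * h1
  have hmon : (1 + X : R[X]).Monic := by rw [add_comm]; exact monic_X_add_C 1
  have h3 : a' = 0 := by
    have := (hmon.pow (m+1)).mul_right_eq_zero_iff (q := a')
    exact this.1 h2
  rw [h3, map_zero] at ha
  have h4 : (a - b) = (a - b) * (LaurentPolynomial.T n1 * LaurentPolynomial.T (-n1)) := by
    rw [← LaurentPolynomial.T_add]; simp
  rw [← sub_eq_zero, h4, ← mul_assoc, ← ha, zero_mul]

theorem claim [Nontrivial R] (hm : 1 ≤ m) {H Hi K Ki : R[X]} (hG : G * Gi = 1) (hH : H * Hi = 1) (hK : K * Ki = 1)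
    (hK0 : K.coeff 0 = 1) (hGH : evth m H = iu G * iv K) (M : ℕ) (hM : H.natDegree < M) :
    ∑ i ∈ Finset.range M, C (H.coeff i) * (AA m G Gi)^[i] (xp m G Gi) = DG G (xp m G Gi) := by
  obtain ⟨d, hd⟩ := key_rel hm hG hH hK hK0 hGH
  choose y hy hy' using AA_iter (m := m) hm hG
  have hG0 : LaurentPolynomial.C (G.coeff 0 ^ m) * LaurentPolynomial.C (Gi.coeff 0 ^ m) = 1 := by
    rw [← map_mul, ← mul_pow, ← mul_coeff_zero, hG]; simp
  have h := xp_y (m := m) hG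
  have h2 : yy G = - iu (xp m G Gi) * (LaurentPolynomial.C (Gi.coeff 0 ^ m) * (∑ j ∈ Finset.range m, evth m (d j) * yy G ^ (j + 1))
      + evth m H) := by
    apply th_cancel (m := m)
    linear_combination (iu (xp m G Gi) * LaurentPolynomial.C (Gi.coeff 0 ^ m)) * hd - LaurentPolynomial.C (Gi.coeff 0 ^ m) * yy G * h
      - (th R m * yy G + th R m * evth m H * iu (xp m G Gi)) * hG0
  have h3 : iu (DG G (xp m G Gi)) = iu (xp m G Gi) * evth m H + iu (xp m G Gi) * (yy G + Gi.coeff 0 ^ m • ∑ j ∈ Finset.range m, evth m (d j) * yy G ^ (j + 1)) := by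
    rw [iu_DG, xp_zero hG, ← LC_smul, map_one, ← yy]
    linear_combination -h2
  have h4 : iu (∑ i ∈ Finset.range M, C (H.coeff i) * (AA m G Gi)^[i] (xp m G Gi)) =
      iu (xp m G Gi) * evth m H + iu (xp m G Gi) * ∑ i ∈ Finset.range M, H.coeff i • y i := by
    rw [map_sum, evth, coe_eval₂RingHom, eval₂_eq_sum_range' _ hM, ← mul_add, ← Finset.sum_add_distrib, Finset.mul_sum]
    refine Finset.sum_congr rfl fun i _ => ?_
    rw [map_mul, iu_C, ← LC_smul]
    linear_combination LaurentPolynomial.C (H.coeff i) * hy' i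
  rw [← sub_eq_zero]
  refine indep' hm hG (xp m G Gi) (xp_zero hG) _ (∑ i ∈ Finset.range M, H.coeff i • y i - (yy G + Gi.coeff 0 ^ m • ∑ j ∈ Finset.range m, evth m (d j) * yy G ^ (j + 1))) ?_ ?_
  · apply sub_mem
    · exact sum_mem fun i _ => Submodule.smul_mem _ _ (hy i)
    · apply add_mem
      · simpa using NN_y G (show 0 < m by omega)
      · refine Submodule.smul_mem _ _ (sum_mem fun j hj => NN_ev hm G _ (NN_y G (Finset.mem_range.1 hj)))
  · rw [map_sub, h3, h4]; ring

end sol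
end TI

namespace TI
open Polynomial

section sol2
universe u
variable {R : Type u} [CommRing R] {m : ℕ} {G Gi : R[X]} 

theorem DG_C_mul (G : R[X]) (c : R) (p : R[X]) : DG G (C c * p) = C c * DG G p := by
  show divX (C c * p) * (1 + X) * G = C c * (divX p * (1 + X) * G)
  rw [divX_C_mul]; ring

theorem AA_sum (M : ℕ) (c : ℕ → R) (s : ℕ → R[X]) :
    AA m G Gi (∑ i ∈ Finset.range M, C (c i) * s i) = ∑ i ∈ Finset.range M, C (c i) * AA m G Gi (s i) := by
  have h1 : ∀ k (c : R) p, (DG G)^[k] (C c * p) = C c * (DG G)^[k] p := by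
    intro k c
    induction k with
    | zero => intro p; rfl
    | succ k ih => intro p; rw [Function.iterate_succ_apply, DG_C_mul, ih]; rfl
  have h2 : (DG G)^[m] (∑ i ∈ Finset.range M, C (c i) * s i) = ∑ i ∈ Finset.range M, C (c i) * (DG G)^[m] (s i) := by
    induction M with
    | zero => simp
    | succ k ih => rw [Finset.sum_range_succ, Finset.sum_range_succ, iterate_map_add, ih, h1]
  rw [AA, h2, Finset.mul_sum, Finset.mul_sum]
  refine Finset.sum_congr rfl fun i _ => ?_
  rw [AA]; ring

theorem alg_isSol [Nontrivial R] (hm : 1 ≤ m) {H Hi K Ki : R[X]} (hG : G * Gi = 1) (hH : H * Hi = 1) (hK : K * Ki = 1)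
    (hK0 : K.coeff 0 = 1) (hGH : evth m H = iu G * iv K) (h : ℕ → R) (z : R) (hh : ∀ i, H.coeff i = h i * z ^ i)
    (M : ℕ) (hM : ∀ i ≥ M, h i = 0) :
    ∃ Y Z, IsSol (z * Gi.coeff 0 ^ m) h m Y Z ∧ Y 1 = (xp m G Gi).coeff 1 * G.coeff 0 := by
  let L := M + H.natDegree + 1
  let S : ℕ → R[X] := fun r => ∑ i ∈ Finset.range L, C (h (r + i) * z ^ i) * (AA m G Gi)^[i] (xp m G Gi)
  have hS0 : DG G (xp m G Gi) = S 0 := by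
    rw [← claim hm hG hH hK hK0 hGH L (by omega)]
    refine Finset.sum_congr rfl fun i _ => ?_
    rw [hh, zero_add]
  refine ⟨_, _, isSol_of_twisted (constantCoeff (R := R)) C (DG G) (by simp) ?_ ?_ _ h m (xp m G Gi) S (xp_zero hG) hS0 ?_, ?_⟩
  · intro k
    show divX (C k) * (1 + X) * G = 0
    simp
  · intro a b
    show divX (a * b) * (1 + X) * G = divX a * (1 + X) * G * b + C (a.coeff 0) * (divX b * (1 + X) * G)
    rw [divX_mul_twist]; ring
  · intro r
    have h1 := AA_sum (m := m) (G := G) (Gi := Gi) L (fun i => h (r + 1 + i) * z ^ i) (fun i => (AA m G Gi)^[i] (xp m G Gi))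
    change AA m G Gi (S (r + 1)) = _ at h1
    rw [map_mul, mul_assoc, show C (Gi.coeff 0 ^ m) * (xp m G Gi * (DG G)^[m] (S (r + 1))) = AA m G Gi (S (r + 1)) from rfl, h1]
    simp only [S, L]
    rw [Finset.sum_range_succ', Finset.sum_range_succ, hM (r + 1 + (M + H.natDegree)) (by omega), add_comm]
    simp only [add_zero, pow_zero, mul_one, Function.iterate_zero, id, zero_mul, map_zero]
    congr 1
    rw [Finset.mul_sum]
    refine Finset.sum_congr rfl fun i _ => ?_
    rw [Function.iterate_succ_apply', show r + (i + 1) = r + 1 + i by ring, pow_succ]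
    simp only [map_mul]
    ring
  · show constantCoeff (DG G (xp m G Gi)) = _
    show (divX (xp m G Gi) * (1 + X) * G).coeff 0 = _
    simp [mul_coeff_zero]

theorem one_add_pow_sq {S : Type*} [CommRing S] {a : S} (ha : a ^ 2 = 0) (k : ℕ) : (1 + a) ^ k = 1 + k * a := by
  induction k with
  | zero => simp
  | succ k ih => rw [pow_succ, ih]; push_cast; linear_combination (k : S) * ha

theorem one_sub_pow_sq {S : Type*} [CommRing S] {a : S} (ha : a ^ 2 = 0) (k : ℕ) : (1 - a) ^ k = 1 - k * a := by
  have := one_add_pow_sq (a := -a) (by rw [neg_sq, ha]) k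
  rw [← sub_eq_add_neg] at this
  rw [this]; ring

/-- nonnegative part of `θ^λ` -/
noncomputable def gp (R : Type u) [CommRing R] (m l : ℕ) : R[X] :=
  ∑ j ∈ Finset.range (l + 1), C (((m + 1) * l).choose (m * l + j) : R) * X ^ j
/-- negative part of `θ^λ` -/
noncomputable def gn (R : Type u) [CommRing R] (m l : ℕ) : R[X] :=
  ∑ j ∈ Finset.range (m * l), C (((m + 1) * l).choose j : R) * X ^ (m * l - j)

theorem th_pow (m l : ℕ) : th R m ^ l = iu (gp R m l) + iv (gn R m l) := by
  have hp : ∀ k, (LaurentPolynomial.T 1 ^ k * LaurentPolynomial.T (-1) ^ k : LaurentPolynomial R) = 1 := fun k => by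
    rw [← mul_pow, T_mul_inv, one_pow]
  rw [th, T_neg_nat, mul_pow, map_pow, ← pow_mul, ← pow_mul, map_add, map_one, iu_X, add_comm 1, add_pow,
    show (m + 1) * l + 1 = m * l + (l + 1) by ring, Finset.sum_range_add, add_comm, add_mul, gp, gn, map_sum, map_sum,
    Finset.sum_mul, Finset.sum_mul]
  congr 1
  · refine Finset.sum_congr rfl fun j _ => ?_
    simp only [one_pow, mul_one, map_mul, map_pow, iu_X, map_natCast]
    rw [pow_add]
    linear_combination (LaurentPolynomial.T 1 ^ j * (((m + 1) * l).choose (m * l + j) : LaurentPolynomial R)) * hp (m * l)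
  · refine Finset.sum_congr rfl fun j hj => ?_
    have : j < m * l := Finset.mem_range.1 hj
    obtain ⟨k, hk⟩ := Nat.exists_eq_add_of_lt this
    simp only [one_pow, mul_one, map_mul, map_pow, iv_X, map_natCast]
    rw [hk, show j + k + 1 = j + (k + 1) by ring, Nat.add_sub_cancel_left, pow_add]
    linear_combination (LaurentPolynomial.T (-1) ^ (k+1) * (((m + 1) * l).choose j : LaurentPolynomial R)) * hp j

theorem gp_zero (m l : ℕ) : (gp R m l).coeff 0 = (((m + 1) * l).choose (m * l) : ℕ) := by
  rw [gp, finsetSum_coeff, Finset.sum_eq_single 0]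
  · simp
  · intro j _ hj; rw [coeff_C_mul, coeff_X_pow, if_neg (by omega), mul_zero]
  · simp

theorem gp_one (m l : ℕ) : (gp R m l).coeff 1 = (((m + 1) * l).choose (m * l + 1) : ℕ) := by
  rw [gp, finsetSum_coeff]
  rcases Nat.eq_zero_or_pos l with rfl | hl
  · simp [coeff_one]
  rw [Finset.sum_eq_single 1]
  · simp
  · intro j _ hj; rw [coeff_C_mul, coeff_X_pow, if_neg (by omega), mul_zero]
  · intro h; exact absurd (Finset.mem_range.2 (by omega)) h

theorem gn_zero (m l : ℕ) : (gn R m l).coeff 0 = 0 := by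
  rw [gn, finsetSum_coeff]
  refine Finset.sum_eq_zero fun j hj => ?_
  have := Finset.mem_range.1 hj
  rw [coeff_C_mul, coeff_X_pow, if_neg (by omega), mul_zero]

theorem prod_inv {ι S : Type*} [CommRing S] (s : Finset ι) (a : ι → S) (ha : ∀ i, a i ^ 2 = 0) :
    (∏ i ∈ s, (1 + a i)) * (∏ i ∈ s, (1 - a i)) = 1 := by
  rw [← Finset.prod_mul_distrib]
  exact Finset.prod_eq_one fun i _ => by linear_combination - ha i

theorem coeff_one_eq (p : R[X]) : p.coeff 1 = (derivative p).eval 0 := by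
  rw [← coeff_zero_eq_eval_zero, coeff_derivative]; simp

theorem conc [Nontrivial R] (hm : 1 ≤ m) {ι : Type*} [Fintype ι] [DecidableEq ι] (lam : ι → ℕ) (x : ι → R) (hx : ∀ c, x c ^ 2 = 0)
    (h : ℕ → R) (z : R) (hh : ∀ i, (∏ c, (1 + C (x c) * X ^ lam c) : R[X]).coeff i = h i * z ^ i) (M : ℕ) (hM : ∀ i ≥ M, h i = 0) :
    ∃ Y Z, IsSol (z * ∏ c, (1 - m * (((m + 1) * lam c).choose (m * lam c) : ℕ) * x c)) h m Y Z ∧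
      Y 1 = (∏ c, (1 + (((m + 1) * lam c).choose (m * lam c) : ℕ) * x c)) *
        (1 - m * ∑ c, (((m + 1) * lam c).choose (m * lam c + 1) : ℕ) * x c) := by
  have sq : ∀ (p : R[X]) c, (C (x c) * p) ^ 2 = 0 := fun p c => by rw [mul_pow, ← C_pow, hx]; simp
  have sq0 : ∀ (p : R) c, (p * x c) ^ 2 = 0 := fun p c => by rw [mul_pow, hx]; simp
  have hG := prod_inv Finset.univ (fun c => C (x c) * gp R m (lam c)) (fun c => sq _ c)
  have hK := prod_inv Finset.univ (fun c => C (x c) * gn R m (lam c)) (fun c => sq _ c)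
  have hH := prod_inv Finset.univ (fun c => C (x c) * X ^ (lam c)) (fun c => sq _ c)
  have hG0 : (∏ c, (1 + C (x c) * gp R m (lam c))).coeff 0 = ∏ c, (1 + (((m + 1) * lam c).choose (m * lam c) : ℕ) * x c) := by
    rw [coeff_zero_eq_eval_zero, eval_prod]
    refine Finset.prod_congr rfl fun c _ => ?_
    rw [eval_add, eval_mul, ← coeff_zero_eq_eval_zero (gp _ _ _), gp_zero]; simp; ring
  have hGi0 : (∏ c, (1 - C (x c) * gp R m (lam c))).coeff 0 = ∏ c, (1 - (((m + 1) * lam c).choose (m * lam c) : ℕ) * x c) := by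
    rw [coeff_zero_eq_eval_zero, eval_prod]
    refine Finset.prod_congr rfl fun c _ => ?_
    rw [eval_sub, eval_mul, ← coeff_zero_eq_eval_zero (gp _ _ _), gp_zero]; simp; ring
  obtain ⟨Y, Z, hYZ, hY⟩ := alg_isSol (m := m) hm hG hH hK (by
      rw [coeff_zero_eq_eval_zero, eval_prod]
      refine Finset.prod_eq_one fun c _ => ?_
      rw [eval_add, eval_mul, ← coeff_zero_eq_eval_zero (gn _ _ _), gn_zero]; simp) (by
      rw [map_prod, map_prod, map_prod, ← Finset.prod_mul_distrib]
      refine Finset.prod_congr rfl fun c _ => ?_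
      simp only [map_add, map_mul, map_one, map_pow, evth_X, evth_C, iu_C, iv_C, th_pow]
      have : (LaurentPolynomial.C (x c)) ^ 2 = 0 := by rw [← map_pow, hx, map_zero]
      linear_combination (- iu (gp R m (lam c)) * iv (gn R m (lam c))) * this) h z hh M hM
  have e1 : (∏ c, (1 - C (x c) * gp R m (lam c))).coeff 0 ^ m = ∏ c, (1 - m * (((m + 1) * lam c).choose (m * lam c) : ℕ) * x c) := by
    rw [hGi0, ← Finset.prod_pow]
    refine Finset.prod_congr rfl fun c _ => ?_
    rw [one_sub_pow_sq (sq0 _ c), mul_assoc]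
  rw [e1] at hYZ
  refine ⟨Y, Z, hYZ, ?_⟩
  rw [hY, hG0, mul_comm]
  congr 1
  obtain ⟨k, rfl⟩ : ∃ k, m = k + 1 := ⟨m - 1, by omega⟩
  have hGG := congrArg (fun q => coeff q 0) hG
  simp only [mul_coeff_zero, hG0] at hGG
  generalize hGi : (∏ c, (1 - C (x c) * gp R (k + 1) (lam c))) = Gi at *
  have hd : (derivative Gi).eval 0 = ∑ c, (∏ d ∈ Finset.univ.erase c, (1 - (((k + 1 + 1) * lam d).choose ((k + 1) * lam d) : ℕ) * x d)) *
      (- ((((k + 1 + 1) * lam c).choose ((k + 1) * lam c + 1) : ℕ) * x c)) := by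
    rw [← hGi, derivative_prod_finset, eval_finsetSum]
    refine Finset.sum_congr rfl fun c _ => ?_
    rw [eval_mul, eval_prod]
    congr 1
    · refine Finset.prod_congr rfl fun c _ => ?_
      rw [eval_sub, eval_mul, ← coeff_zero_eq_eval_zero (gp _ _ _), gp_zero]; simp; ring
    · simp [← coeff_one_eq, gp_one]; ring
  have hd2 : (∏ c, (1 + (((k + 1 + 1) * lam c).choose ((k + 1) * lam c) : ℕ) * x c)) * (derivative Gi).eval 0 = 
       - ∑ c, (((k + 1 + 1) * lam c).choose ((k + 1) * lam c + 1) : ℕ) * x c := by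
    rw [hd, Finset.mul_sum, ← Finset.sum_neg_distrib]
    refine Finset.sum_congr rfl fun c _ => ?_
    rw [← Finset.mul_prod_erase _ _ (Finset.mem_univ c)]
    have := prod_inv (Finset.univ.erase c) (fun d => (((k + 1 + 1) * lam d).choose ((k + 1) * lam d) : ℕ) * x d) (fun c => sq0 _ c)
    have hxc := hx c
    generalize (∏ d ∈ Finset.univ.erase c, (1 + (((k + 1 + 1) * lam d).choose ((k + 1) * lam d) : ℕ) * x d)) = a at *
    generalize (∏ d ∈ Finset.univ.erase c, (1 - (((k + 1 + 1) * lam d).choose ((k + 1) * lam d) : ℕ) * x d)) = b at *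
    generalize ((((k + 1 + 1) * lam c).choose ((k + 1) * lam c) : ℕ) : R) = e at *
    generalize ((((k + 1 + 1) * lam c).choose ((k + 1) * lam c + 1) : ℕ) : R) = f at *
    linear_combination (-(1 + e * x c) * f * x c) * this - e * f * hxc
  rw [coeff_one_eq, xp, hG0]
  simp only [derivative_mul, derivative_C, derivative_pow, derivative_add, derivative_one, derivative_X, eval_add, eval_mul, eval_pow,
    eval_one, eval_X, eval_C]
  rw [← coeff_zero_eq_eval_zero Gi]
  rw [show (1:R[X]).coeff 0 = 1 by simp] at hGG
  generalize (∏ c, (1 + (((k + 1 + 1) * lam c).choose ((k + 1) * lam c) : ℕ) * x c)) = a at *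
  generalize ∑ c, ((((k + 1 + 1) * lam c).choose ((k + 1) * lam c + 1) : ℕ) : R) * x c = f at *
  have hp : ∀ n, a ^ n * Gi.coeff 0 ^ n = 1 := fun n => by rw [← mul_pow, hGG, one_pow]
  have hc : eval 0 (C (((k + 1 : ℕ)) : R)) = (k : R) + 1 := by simp
  simp
  linear_combination hp (k+1) + (k+1) * a * eval 0 (derivative Gi) * hp k + (k+1) * hd2

end sol2
end TI

namespace TI
open Polynomial

section abel

variable {ι : Type*} [DecidableEq ι]

theorem sum_swap {M : Type*} [AddCommMonoid M] (T : Finset ι) (F : Finset ι → Finset ι → M) :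
    ∑ S ∈ T.powerset, ∑ V ∈ (T \ S).powerset, F S V = ∑ U ∈ T.powerset, ∑ S ∈ U.powerset, F S (U \ S) := by
  rw [Finset.sum_sigma', Finset.sum_sigma']
  refine Finset.sum_bij' (fun x _ => ⟨x.1 ∪ x.2, x.1⟩) (fun x _ => ⟨x.2, x.1 \ x.2⟩) ?_ ?_ ?_ ?_ ?_
  · rintro ⟨S, V⟩ h
    simp only [Finset.mem_sigma, Finset.mem_powerset] at h ⊢
    exact ⟨Finset.union_subset h.1 (h.2.trans Finset.sdiff_subset), Finset.subset_union_left⟩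
  · rintro ⟨U, S⟩ h
    simp only [Finset.mem_sigma, Finset.mem_powerset] at h ⊢
    exact ⟨h.2.trans h.1, Finset.sdiff_subset_sdiff h.1 le_rfl⟩
  · rintro ⟨S, V⟩ h
    simp only [Finset.mem_sigma, Finset.mem_powerset] at h ⊢
    have : Disjoint V S := Finset.disjoint_of_subset_left h.2 Finset.sdiff_disjoint
    simp [Finset.union_sdiff_left, Finset.sdiff_eq_self_of_disjoint this]
  · rintro ⟨U, S⟩ h
    simp only [Finset.mem_sigma, Finset.mem_powerset] at h ⊢
    simp [Finset.union_sdiff_of_subset h.2]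
  · rintro ⟨S, V⟩ h
    simp only [Finset.mem_sigma, Finset.mem_powerset] at h ⊢
    have : Disjoint V S := Finset.disjoint_of_subset_left h.2 Finset.sdiff_disjoint
    simp [Finset.union_sdiff_left, Finset.sdiff_eq_self_of_disjoint this]

theorem alt_sum (w : ι → ℚ) (U : Finset ι) : ∀ (p : ℚ[X]) (b : ℚ), p.degree < U.card →
    ∑ S ∈ U.powerset, (-1) ^ S.card * p.eval (b + ∑ c ∈ S, w c) = 0 := by
  induction U using Finset.induction_on with
  | empty =>
    intro p b h
    have : p = 0 := by
      rw [← degree_eq_bot]; simpa using! h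
    simp [this]
  | insert a U ha ih =>
    intro p b h
    by_cases hp : p = 0
    · simp [hp]
    have hlt : (p - taylor (w a) p).degree < U.card := by
      have h1 : (p - taylor (w a) p).degree < p.degree :=
        degree_sub_lt_left (by rw [degree_taylor]) hp (by rw [leadingCoeff_taylor])
      rw [Finset.card_insert_of_notMem ha] at h
      rw [degree_eq_natDegree hp] at h h1
      have : p.natDegree < U.card + 1 := by exact_mod_cast h
      refine h1.trans_le ?_
      exact_mod_cast Nat.lt_succ_iff.1 this
    rw [Finset.sum_powerset_insert ha, ← ih _ b hlt, ← Finset.sum_add_distrib]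
    refine Finset.sum_congr rfl fun S hS => ?_
    have haS : a ∉ S := fun h => ha (Finset.mem_powerset.1 hS h)
    rw [Finset.card_insert_of_notMem haS, Finset.sum_insert haS, eval_sub, taylor_eval, pow_succ,
      show b + (w a + ∑ c ∈ S, w c) = b + ∑ c ∈ S, w c + w a by ring]
    ring

theorem abel_inner (w : ι → ℚ) (hw : ∀ c, 0 ≤ w c) (T : Finset ι) :
    ∑ S ∈ T.powerset, (1 + ∑ c ∈ S, w c) ^ ((S.card : ℤ) - 2) * (- ∑ c ∈ S, w c) ^ (T \ S).card
      = 1 - ∑ c ∈ T, w c / (1 + w c) := by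
  have hne : ∀ S : Finset ι, (1 + ∑ c ∈ S, w c) ≠ 0 := fun S => by
    have := Finset.sum_nonneg (s := S) fun c _ => hw c
    positivity
  let e : Finset ι → ℚ := fun U => ∑ S ∈ U.powerset, (-1) ^ (U \ S).card * (1 + ∑ c ∈ S, w c) ^ ((U.card : ℤ) - 2)
  have h1 : ∑ S ∈ T.powerset, (1 + ∑ c ∈ S, w c) ^ ((S.card : ℤ) - 2) * (- ∑ c ∈ S, w c) ^ (T \ S).card
      = ∑ U ∈ T.powerset, e U := by
    simp only [e]
    have : ∀ U, U ∈ T.powerset → ∑ S ∈ U.powerset, (-1) ^ (U \ S).card * (1 + ∑ c ∈ S, w c) ^ ((U.card : ℤ) - 2) =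
       ∑ S ∈ U.powerset, (1 + ∑ c ∈ S, w c) ^ ((S.card : ℤ) - 2) * (-(1 + ∑ c ∈ S, w c)) ^ (U \ S).card := by
      intro U _
      refine Finset.sum_congr rfl fun S hS => ?_
      have hS := Finset.mem_powerset.1 hS
      rw [neg_pow (1 + _), ← zpow_natCast (1 + ∑ c ∈ S, w c), mul_left_comm, ← zpow_add₀ (hne S)]
      congr 2
      have := Finset.card_sdiff_add_card_eq_card hS
      omega
    rw [Finset.sum_congr rfl this,
      ← sum_swap T (fun S V => (1 + ∑ c ∈ S, w c) ^ ((S.card : ℤ) - 2) * (-(1 + ∑ c ∈ S, w c)) ^ V.card)]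
    refine Finset.sum_congr rfl fun S _ => ?_
    rw [← Finset.mul_sum]
    congr 1
    have := Finset.sum_pow_mul_eq_add_pow (-(1 + ∑ c ∈ S, w c)) 1 (T \ S)
    simp only [one_pow, mul_one] at this
    rw [this]; congr 1; ring
  have e0 : e ∅ = 1 := by simp [e]
  have e1 : ∀ c, e {c} = - (w c / (1 + w c)) := by
    intro c
    have h2 : 1 + w c ≠ 0 := by simpa using hne {c}
    simp only [e]
    rw [show ({c} : Finset ι) = insert c ∅ from rfl, Finset.sum_powerset_insert (by simp)]
    simp
    field_simp
    ring
  have e2 : ∀ U : Finset ι, 2 ≤ U.card → e U = 0 := by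
    intro U hU
    obtain ⟨k, hk⟩ := Nat.exists_eq_add_of_le hU
    have h3 := alt_sum w U (X ^ k) 1 (by rw [degree_X_pow, hk]; exact_mod_cast (by omega))
    have : e U = (-1) ^ U.card * ∑ S ∈ U.powerset, (-1) ^ S.card * (X ^ k : ℚ[X]).eval (1 + ∑ c ∈ S, w c) := by
      simp only [e]
      rw [Finset.mul_sum]
      refine Finset.sum_congr rfl fun S hS => ?_
      have hS := Finset.mem_powerset.1 hS
      rw [← Finset.card_sdiff_add_card_eq_card hS, eval_pow, eval_X, pow_add, Finset.card_sdiff_add_card_eq_card hS, hk,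
        show (((2 + k : ℕ) : ℤ) - 2) = (k : ℤ) by push_cast; ring, zpow_natCast]
      have : ((-1 : ℚ) ^ S.card) * (-1) ^ S.card = 1 := by rw [← mul_pow]; simp
      linear_combination (-((-1) ^ (U \ S).card * (1 + ∑ c ∈ S, w c) ^ k)) * this
    rw [this, h3, mul_zero]
  rw [h1]
  clear h1
  induction T using Finset.induction_on with
  | empty => simp [e0]
  | insert a T ha ih =>
    have hs : ∑ U ∈ T.powerset, e (insert a U) = e (insert a ∅) := by
      apply Finset.sum_eq_single ∅
      · intro U hU hne
        apply e2
        rw [Finset.card_insert_of_notMem (fun h => ha (Finset.mem_powerset.1 hU h))]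
        have := Finset.card_pos.2 (Finset.nonempty_iff_ne_empty.2 hne)
        omega
      · simp
    rw [Finset.sum_powerset_insert ha, ih, Finset.sum_insert ha, hs, show insert a (∅ : Finset ι) = {a} from rfl, e1]
    ring

theorem abel_ring {K : Type*} [CommRing K] [Algebra ℚ K] [Fintype ι] (w : ι → ℚ) (hw : ∀ c, 0 ≤ w c) (y : ι → K)
    (hy : ∀ c, y c ^ 2 = 0) :
    ∑ S : Finset ι, algebraMap ℚ K ((1 + ∑ c ∈ S, w c) ^ ((S.card : ℤ) - 2)) * (∏ c ∈ S, y c) *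
        ∏ c, (1 - algebraMap ℚ K (∑ c ∈ S, w c) * y c)
      = (∏ c, (1 + y c)) * (1 - ∑ c, algebraMap ℚ K (w c / (1 + w c)) * y c) := by
  have hl : ∀ S : Finset ι, algebraMap ℚ K ((1 + ∑ c ∈ S, w c) ^ ((S.card : ℤ) - 2)) * (∏ c ∈ S, y c) *
        ∏ c, (1 - algebraMap ℚ K (∑ c ∈ S, w c) * y c) = ∑ V ∈ (Finset.univ \ S).powerset,
        algebraMap ℚ K ((1 + ∑ c ∈ S, w c) ^ ((S.card : ℤ) - 2) * (- ∑ c ∈ S, w c) ^ V.card) * ∏ c ∈ S ∪ V, y c := by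
    intro S
    rw [← Finset.prod_sdiff (Finset.subset_univ S)]
    have h1 : (∏ c ∈ S, y c) * ∏ c ∈ S, (1 - algebraMap ℚ K (∑ c ∈ S, w c) * y c) = ∏ c ∈ S, y c := by
      rw [← Finset.prod_mul_distrib]
      refine Finset.prod_congr rfl fun c _ => ?_
      linear_combination (- algebraMap ℚ K (∑ c ∈ S, w c)) * hy c
    have h2 : ∏ c ∈ Finset.univ \ S, (1 - algebraMap ℚ K (∑ c ∈ S, w c) * y c) = ∑ V ∈ (Finset.univ \ S).powerset,
        algebraMap ℚ K ((- ∑ c ∈ S, w c) ^ V.card) * ∏ c ∈ V, y c := by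
      rw [Finset.prod_congr rfl (fun c _ => show (1 - algebraMap ℚ K (∑ c ∈ S, w c) * y c) = 1 + algebraMap ℚ K (- ∑ c ∈ S, w c) * y c by
        rw [map_neg]; ring), Finset.prod_one_add]
      refine Finset.sum_congr rfl fun V _ => ?_
      rw [Finset.prod_mul_distrib, Finset.prod_const, map_pow]
    rw [mul_comm (∏ c ∈ Finset.univ \ S, _), ← mul_assoc, mul_assoc _ (∏ c ∈ S, y c), h1, h2, Finset.mul_sum]
    refine Finset.sum_congr rfl fun V hV => ?_
    have : Disjoint S V := (Finset.disjoint_of_subset_left (Finset.mem_powerset.1 hV) Finset.sdiff_disjoint).symm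
    rw [Finset.prod_union this, map_mul]; ring
  simp only [hl]
  have sw := sum_swap Finset.univ (fun S V : Finset ι =>
    algebraMap ℚ K ((1 + ∑ c ∈ S, w c) ^ ((S.card : ℤ) - 2) * (- ∑ c ∈ S, w c) ^ V.card) * ∏ c ∈ S ∪ V, y c)
  rw [Finset.powerset_univ] at sw
  rw [sw]
  have h3 : ∀ U : Finset ι, ∑ S ∈ U.powerset, algebraMap ℚ K ((1 + ∑ c ∈ S, w c) ^ ((S.card : ℤ) - 2) * (- ∑ c ∈ S, w c) ^ (U \ S).card) * ∏ c ∈ S ∪ (U \ S), y c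
     = (∏ c ∈ U, y c) * (1 - ∑ c ∈ U, algebraMap ℚ K (w c / (1 + w c))) := by
    intro U
    have := congrArg (algebraMap ℚ K) (abel_inner w hw U)
    rw [map_sub, map_one, map_sum, map_sum] at this
    rw [← this, Finset.mul_sum]
    refine Finset.sum_congr rfl fun S hS => ?_
    rw [Finset.union_sdiff_of_subset (Finset.mem_powerset.1 hS), mul_comm]
  simp only [h3]
  rw [mul_sub, mul_one, Finset.prod_one_add, Finset.powerset_univ]
  simp only [mul_sub, mul_one, Finset.sum_sub_distrib]
  congr 1
  rw [← Finset.powerset_univ, ← Finset.prod_one_add, Finset.mul_sum]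
  have h4 : ∀ c, (∏ c, (1 + y c)) * (algebraMap ℚ K (w c / (1 + w c)) * y c) =
     ∑ U : Finset ι, if c ∈ U then (∏ d ∈ U, y d) * algebraMap ℚ K (w c / (1 + w c)) else 0 := by
    intro c
    rw [← Finset.mul_prod_erase _ _ (Finset.mem_univ c), Finset.prod_one_add]
    rw [← Finset.powerset_univ, ← Finset.insert_erase (Finset.mem_univ c), Finset.sum_powerset_insert (by simp)]
    have hz : (∑ t ∈ (Finset.univ.erase c).powerset, if c ∈ t then (∏ d ∈ t, y d) * (algebraMap ℚ K) (w c / (1 + w c)) else 0) = 0 := by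
      apply Finset.sum_eq_zero
      intro U hU
      have : c ∉ U := fun h => by simpa using (Finset.mem_powerset.1 hU h)
      rw [if_neg this]
    rw [hz, zero_add, Finset.insert_erase (Finset.mem_univ c)]
    · have : (1 + y c) * y c = y c := by linear_combination hy c
      calc _ = ((1 + y c) * y c) * (∑ x ∈ (Finset.univ.erase c).powerset, ∏ d ∈ x, y d) * algebraMap ℚ K (w c / (1 + w c)) := by ring
        _ = _ := by
          rw [this, Finset.mul_sum, Finset.sum_mul]
          refine Finset.sum_congr rfl fun U hU => ?_
          have : c ∉ U := fun h => by simpa using (Finset.mem_powerset.1 hU h)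
          rw [if_pos (Finset.mem_insert_self _ _), Finset.prod_insert this]
  simp only [h4]
  rw [Finset.sum_comm, Finset.powerset_univ]
  refine Finset.sum_congr rfl fun U _ => ?_
  rw [Finset.mul_sum, Finset.sum_ite_mem, Finset.univ_inter]

end abel
end TI

namespace TI
open Polynomial

section fin
universe u

theorem exists_z {K : Type*} [CommRing K] {ι : Type*} [Fintype ι] (lam : ι → ℕ) (t : K) (a : ι → K) (ha : ∀ c, a c ^ 2 = 0) :
    ∃ z, z = t * ∏ c, (1 + a c * z ^ lam c) := by
  let I : Ideal K := Ideal.span (Set.range a)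
  have hI : IsNilpotent I := by
    rw [Ideal.FG.isNilpotent_iff_le_nilradical]
    · rw [Ideal.span_le]
      rintro _ ⟨c, rfl⟩
      exact ⟨2, ha c⟩
    · exact ⟨(Set.finite_range a).toFinset, by simp [I]⟩
  obtain ⟨N, hN⟩ := hI
  let F : K → K := fun z => t * ∏ c, (1 + a c * z ^ lam c)
  have step : ∀ k z z', z - z' ∈ I ^ k → F z - F z' ∈ I ^ (k + 1) := by
    intro k z z' h
    simp only [F]
    rw [← mul_sub]
    apply Ideal.mul_mem_left
    rw [← Ideal.Quotient.mk_eq_mk_iff_sub_mem, map_prod, map_prod]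
    refine Finset.prod_congr rfl fun c _ => ?_
    rw [Ideal.Quotient.mk_eq_mk_iff_sub_mem, pow_succ', add_sub_add_left_eq_sub, ← mul_sub]
    apply Ideal.mul_mem_mul (show a c ∈ I from Ideal.subset_span (Set.mem_range_self c))
    obtain ⟨q, hq⟩ := sub_dvd_pow_sub_pow z z' (lam c)
    rw [hq]
    exact Ideal.mul_mem_right _ _ h
  have it : ∀ k, F^[k + 1] 0 - F^[k] 0 ∈ I ^ k := by
    intro k
    induction k with
    | zero => simp
    | succ k ih => 
      have := step k _ _ ih
      rwa [← Function.iterate_succ_apply' F, ← Function.iterate_succ_apply' F] at this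
  have := it N
  rw [hN, Ideal.zero_eq_bot, Ideal.mem_bot, sub_eq_zero, Function.iterate_succ_apply'] at this
  exact ⟨_, this.symm⟩

theorem gamma_eq (m l : ℕ) : (m : ℚ) * (((m + 1) * l).choose (m * l + 1) : ℕ) =
    (m * l : ℚ) / (1 + m * l) * (((m + 1) * l).choose (m * l) : ℕ) := by
  have h := Nat.choose_succ_right_eq ((m + 1) * l) (m * l)
  rw [show (m + 1) * l - m * l = l by rw [add_mul, one_mul, Nat.add_sub_cancel_left]] at h
  have h' : ((((m + 1) * l).choose (m * l + 1) : ℕ) : ℚ) * (m * l + 1) = (((m + 1) * l).choose (m * l) : ℕ) * l := by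
    exact_mod_cast h
  have : (1 + m * l : ℚ) ≠ 0 := by positivity
  field_simp
  linear_combination m * h'

theorem main_alg {R : Type u} [CommRing R] [Nontrivial R] [Algebra ℚ R] {m : ℕ} (hm : 1 ≤ m)
    {ι : Type*} [Fintype ι] [DecidableEq ι] (lam : ι → ℕ) (x : ι → R) (hx : ∀ c, x c ^ 2 = 0) :
    (PowerSeries.mk fun n => ∑ p ∈ Iv m 0 n, wts (fun r => (∏ c, (1 + C (x c) * X ^ lam c) : R[X]).coeff r) 0 p.2) =
    ∑ S : Finset ι, PowerSeries.C (algebraMap ℚ R ((1 + m * ∑ c ∈ S, lam c : ℚ) ^ ((S.card : ℤ) - 2) *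
        ∏ c ∈ S, (((m + 1) * lam c).choose (m * lam c) : ℕ)) * ∏ c ∈ S, x c) * PowerSeries.X ^ (∑ c ∈ S, lam c) := by
  let β : ι → ℕ := fun c => ((m + 1) * lam c).choose (m * lam c)
  let P : R[X] := ∏ c, (1 + C (x c) * X ^ lam c)
  obtain ⟨z, hz⟩ := exists_z lam (PowerSeries.X : PowerSeries R) (fun c => PowerSeries.C ((m * β c : ℕ) * x c)) (by
    intro c; rw [← map_pow, mul_pow, hx]; simp)
  obtain ⟨xt, hxd⟩ : ∃ xt : ι → PowerSeries R, ∀ c, xt c = PowerSeries.C (x c) * z ^ lam c := ⟨_, fun _ => rfl⟩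
  have hxt : ∀ c, xt c ^ 2 = 0 := by
    intro c; rw [hxd];rw [mul_pow, ← map_pow, hx]; simp
  have sq0 : ∀ (p : PowerSeries R) c, (p * xt c) ^ 2 = 0 := fun p c => by rw [mul_pow, hxt]; simp
  have ht : z * ∏ c, (1 - m * (β c : ℕ) * xt c) = (PowerSeries.X : PowerSeries R) := by
    have e : (∏ c, (1 + PowerSeries.C ((m * β c : ℕ) * x c) * z ^ lam c)) = ∏ c, (1 + (m * β c) * xt c) := by
      refine Finset.prod_congr rfl fun c _ => ?_
      simp [hxd]; ring
    rw [e] at hz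
    have := prod_inv Finset.univ (fun c => (m * β c) * xt c) (fun c => sq0 _ c)
    conv_lhs => rw [hz]
    rw [mul_assoc, this, mul_one]
  obtain ⟨Y, Z, hYZ, hY⟩ := conc hm lam xt hxt (fun r => PowerSeries.C (P.coeff r)) z (by
    intro i
    have : (∏ c, (1 + C (xt c) * X ^ lam c) : (PowerSeries R)[X]) = (P.map PowerSeries.C).comp (C z * X) := by
      simp only [P, Polynomial.map_prod, prod_comp]
      refine Finset.prod_congr rfl fun c _ => ?_
      simp [hxd]
      ring
    rw [this, comp_C_mul_X_coeff, coeff_map]) (P.natDegree + 1) (by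
    intro i hi
    rw [coeff_eq_zero_of_natDegree_lt (by omega), map_zero])
  rw [ht] at hYZ
  obtain ⟨Y', Z', hYZ', hY'⟩ := comb_isSol (fun r => P.coeff r) m
  have huniq := isSol_unique _ m hYZ' hYZ
  rw [hY', hY] at huniq
  rw [huniq]
  let w : ι → ℚ := fun c => m * lam c
  have ab := abel_ring (K := PowerSeries R) w (fun c => by simp only [w]; positivity) (fun c => (β c : PowerSeries R) * xt c) (fun c => sq0 _ c)
  have e2 : ∀ c, (m : PowerSeries R) * ((((m + 1) * lam c).choose (m * lam c + 1) : ℕ) * xt c) = algebraMap ℚ (PowerSeries R) (w c / (1 + w c)) * (β c * xt c) := by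
    intro c
    have := congrArg (algebraMap ℚ (PowerSeries R)) (gamma_eq m (lam c))
    rw [map_mul, map_mul, map_natCast, map_natCast, map_natCast] at this
    simp only [w, β]
    linear_combination xt c * this
  rw [Finset.mul_sum, Finset.sum_congr rfl (fun c _ => e2 c)]
  refine ab.symm.trans (Finset.sum_congr rfl fun S _ => ?_)
  rw [← ht, mul_pow, ← Finset.prod_pow]
  have e3 : ∀ c, (1 - (m : PowerSeries R) * (β c : ℕ) * xt c) ^ (∑ c ∈ S, lam c) = 1 - algebraMap ℚ (PowerSeries R) (∑ c ∈ S, w c) * (β c * xt c) := by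
    intro c
    rw [one_sub_pow_sq (sq0 _ c)]
    simp only [w]
    rw [← Finset.mul_sum]
    simp only [map_mul, map_natCast, ← Nat.cast_sum]
    ring
  rw [Finset.prod_congr rfl (fun c _ => e3 c), ← mul_assoc]
  congr 1
  simp only [hxd]
  rw [Finset.prod_mul_distrib, Finset.prod_mul_distrib, Finset.prod_pow_eq_pow_sum]
  simp only [map_mul, map_prod, w, ← Finset.mul_sum, map_natCast]
  rw [show algebraMap ℚ (PowerSeries R) = (PowerSeries.C).comp (algebraMap ℚ R) from Subsingleton.elim _ _]
  simp only [RingHom.comp_apply, β, Nat.cast_sum, Nat.cast_prod]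
  ring

end fin
end TI

namespace TI
open Polynomial

section fin

theorem wts_map {R S : Type*} [CommRing R] [CommRing S] (f : R →+* S) (h : ℕ → R) (w : List Step) :
    ∀ r, f (wts h r w) = wts (fun i => f (h i)) r w := by
  induction w with
  | nil => intro r; rfl
  | cons s w ih => intro r; cases s <;> simp only [wts, map_mul, ih]

/-- the all-ones exponent -/
noncomputable def ones (ι : Type*) [Fintype ι] : ι →₀ ℕ := ∑ c, Finsupp.single c 1

theorem ones_apply {ι : Type*} [Fintype ι] (c : ι) : ones ι c = 1 := by
  classical
  simp [ones, Finsupp.finsetSum_apply, Finsupp.single_apply]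

theorem prod_X_eq {ι : Type*} (S : Finset ι) :
    (∏ c ∈ S, MvPolynomial.X c : MvPolynomial ι ℚ) = MvPolynomial.monomial (∑ c ∈ S, Finsupp.single c 1) 1 := by
  classical
  induction S using Finset.induction_on with
  | empty => simp
  | insert a S ha ih => rw [Finset.prod_insert ha, Finset.sum_insert ha, ih, MvPolynomial.X, MvPolynomial.monomial_mul, one_mul]

theorem coeff_prod_X {ι : Type*} [Fintype ι] [DecidableEq ι] (S : Finset ι) :
    MvPolynomial.coeff (ones ι) (∏ c ∈ S, MvPolynomial.X c : MvPolynomial ι ℚ) = if S = Finset.univ then 1 else 0 := by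
  rw [prod_X_eq, MvPolynomial.coeff_monomial]
  congr 1
  rw [eq_iff_iff]
  constructor
  · intro h
    ext c
    have := DFunLike.congr_fun h c
    rw [ones_apply, Finsupp.finsetSum_apply] at this
    by_contra hc
    simp only [Finset.mem_univ, iff_true] at hc
    rw [Finset.sum_eq_zero] at this
    · omega
    · intro d hd
      rw [Finsupp.single_apply, if_neg]
      rintro rfl
      exact hc hd
  · rintro rfl; rfl

theorem final_alg {m : ℕ} (hm : 1 ≤ m) {ι : Type*} [Fintype ι] [DecidableEq ι] (lam : ι → ℕ) :
    ∑ p ∈ Iv m 0 (∑ c, lam c), MvPolynomial.coeff (ones ι)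
      (wts (fun r => (∏ c, (1 + C (MvPolynomial.X c) * X ^ lam c) : (MvPolynomial ι ℚ)[X]).coeff r) 0 p.2) =
    (1 + m * (∑ c, lam c : ℕ) : ℚ) ^ ((Fintype.card ι : ℤ) - 2) *
        ∏ c, (((m + 1) * lam c).choose (m * lam c) : ℚ) := by
  let I : Ideal (MvPolynomial ι ℚ) := Ideal.span ((fun s => MvPolynomial.monomial s (1 : ℚ)) '' Set.range (fun c : ι => Finsupp.single c 2))
  have hI : ∀ p ∈ I, MvPolynomial.coeff (ones ι) p = 0 := by
    intro p hp
    by_contra hne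
    rw [MvPolynomial.mem_ideal_span_monomial_image] at hp
    obtain ⟨_, ⟨c, rfl⟩, h⟩ := hp _ (MvPolynomial.mem_support_iff.2 hne)
    have := h c
    rw [ones_apply] at this
    simp at this
  have : Nontrivial (MvPolynomial ι ℚ ⧸ I) := by
    rw [Ideal.Quotient.nontrivial_iff]
    intro h
    have := hI (∏ c, MvPolynomial.X c) (by rw [h]; trivial)
    rw [coeff_prod_X] at this
    simp at this
  let π : MvPolynomial ι ℚ →+* MvPolynomial ι ℚ ⧸ I := Ideal.Quotient.mk I
  have key := main_alg hm lam (fun c => π (MvPolynomial.X c)) (by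
    intro c
    rw [← map_pow]
    refine Ideal.Quotient.eq_zero_iff_mem.2 (Ideal.subset_span ⟨_, ⟨c, rfl⟩, ?_⟩)
    simp [MvPolynomial.X_pow_eq_monomial])
  have key2 := congrArg (PowerSeries.coeff (∑ c, lam c)) key
  rw [PowerSeries.coeff_mk, map_sum] at key2
  simp only [PowerSeries.coeff_C_mul, PowerSeries.coeff_X_pow] at key2
  have e1 : ∀ p : List Step × List Step, wts (fun r => (∏ c, (1 + C (π (MvPolynomial.X c)) * X ^ lam c) : (MvPolynomial ι ℚ ⧸ I)[X]).coeff r) 0 p.2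
      = π (wts (fun r => (∏ c, (1 + C (MvPolynomial.X c) * X ^ lam c) : (MvPolynomial ι ℚ)[X]).coeff r) 0 p.2) := by
    intro p
    rw [wts_map]
    congr 1
    funext r
    rw [← coeff_map, Polynomial.map_prod]
    simp
  have e2 : ∀ (q : ℚ) (S : Finset ι) (b : ℕ), algebraMap ℚ (MvPolynomial ι ℚ ⧸ I) q * (∏ c ∈ S, π (MvPolynomial.X c)) * (if (∑ c, lam c) = b then 1 else 0)
     = π (MvPolynomial.C (if (∑ c, lam c) = b then q else 0) * ∏ c ∈ S, MvPolynomial.X c) := by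
    intro q S b
    rw [map_mul, map_prod]
    split_ifs
    · rw [mul_one]; rfl
    · simp
  simp only [e1, e2] at key2
  rw [← map_sum, ← map_sum, Ideal.Quotient.eq] at key2
  have key3 := hI _ key2
  rw [MvPolynomial.coeff_sub, sub_eq_zero, MvPolynomial.coeff_sum, MvPolynomial.coeff_sum] at key3
  rw [key3, Finset.sum_eq_single Finset.univ]
  · rw [MvPolynomial.coeff_C_mul, coeff_prod_X]
    simp
  · intro S _ hS
    rw [MvPolynomial.coeff_C_mul, coeff_prod_X, if_neg hS, mul_zero]
  · simp

end fin
end TI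

namespace TI
open Step

section lab

/-- number of east steps before position `p` -/
def ee (Q : List Step) (p : ℕ) : ℕ := eastCount (Q.take p)

/-- the north positions of the `j`th ascent -/
def TT (Q : List Step) (j : ℕ) : Finset ℕ :=
  (Finset.range Q.length).filter (fun p => Q[p]? = some N ∧ ee Q p = j)

theorem mem_TT {Q : List Step} {j p : ℕ} : p ∈ TT Q j ↔ Q[p]? = some N ∧ ee Q p = j := by
  simp only [TT, Finset.mem_filter, Finset.mem_range]
  constructor
  · exact fun h => h.2
  · intro h
    refine ⟨?_, h⟩
    exact (List.getElem?_eq_some_iff.1 h.1).1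

theorem ee_succ_N {Q : List Step} {p : ℕ} (h : Q[p]? = some N) : ee Q (p + 1) = ee Q p := by
  simp only [ee]
  rw [List.take_add_one, h, eastCount_append]
  simp [eastCount]

theorem ee_succ_E {Q : List Step} {p : ℕ} (h : Q[p]? = some E) : ee Q (p + 1) = ee Q p + 1 := by
  simp only [ee]
  rw [List.take_add_one, h, eastCount_append]
  simp [eastCount]

theorem ee_mono_succ (Q : List Step) (p : ℕ) : ee Q p ≤ ee Q (p + 1) := by
  simp only [ee]
  rw [List.take_add_one, eastCount_append]
  omega

theorem ee_mono (Q : List Step) : Monotone (ee Q) := monotone_nat_of_le_succ (ee_mono_succ Q)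

theorem ee_le (Q : List Step) (p : ℕ) : ee Q p ≤ eastCount Q := by
  conv_rhs => rw [← List.take_append_drop p Q, eastCount_append]
  simp [ee]

theorem ee_eq_iff {Q : List Step} {a b : ℕ} (hab : a ≤ b) (hb : b ≤ Q.length) :
    ee Q a = ee Q b ↔ ∀ r, a ≤ r → r < b → Q[r]? = some N := by
  induction b, hab using Nat.le_induction with
  | base => simp; intro r h1 h2; omega
  | succ b hab ih =>
    have ih := ih (by omega)
    have m1 := ee_mono Q hab
    obtain ⟨s, hs⟩ : ∃ s, Q[b]? = some s := ⟨Q[b]'(by omega), by simp⟩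
    cases s with
    | N =>
      rw [ee_succ_N hs, ih]
      constructor
      · intro h r h1 h2
        rcases Nat.lt_succ_iff_lt_or_eq.1 h2 with h3 | rfl
        · exact h r h1 h3
        · exact hs
      · intro h r h1 h2; exact h r h1 (by omega)
    | E =>
      rw [ee_succ_E hs]
      constructor
      · intro h; omega
      · intro h
        have := h b hab (by omega)
        rw [hs] at this
        cases this

theorem sameAscent_iff {Q : List Step} {a b : ℕ} (ha : Q[a]? = some N) (hb : Q[b]? = some N) :
    SameAscent Q a b ↔ ee Q a = ee Q b := by
  wlog hab : a ≤ b generalizing a b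
  · rw [eq_comm, ← this hb ha (by omega)]
    simp only [SameAscent, min_comm, max_comm]
  rw [ee_eq_iff hab (List.getElem?_eq_some_iff.1 hb).1.le]
  simp only [SameAscent, min_eq_left hab, max_eq_right hab]
  constructor
  · intro h r h1 h2; exact h r h1 h2.le
  · intro h r h1 h2
    rcases h2.lt_or_eq with h3 | rfl
    · exact h r h1 h3
    · exact hb

theorem card_north (Q : List Step) : ((Finset.range Q.length).filter (fun p => Q[p]? = some N)).card = northCount Q := by
  induction Q with
  | nil => rfl
  | cons s w ih =>
    rw [Finset.card_filter] at ih ⊢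
    rw [List.length_cons, Finset.sum_range_succ']
    simp only [List.getElem?_cons_succ, List.getElem?_cons_zero]
    rw [ih]
    cases s <;> simp [northCount_N, northCount_E]

theorem lab_surj {n : ℕ} {Q : List Step} {lab : Fin n → ℕ} (hQ : northCount Q = n) (h : IsLabelling n Q lab)
    {p : ℕ} (hp : Q[p]? = some N) : ∃ i, lab i = p := by
  have h1 : Finset.univ.image lab ⊆ (Finset.range Q.length).filter (fun p => Q[p]? = some N) := by
    intro q hq
    obtain ⟨i, _, rfl⟩ := Finset.mem_image.1 hq
    have := h.2.1 i
    exact Finset.mem_filter.2 ⟨Finset.mem_range.2 (List.getElem?_eq_some_iff.1 this).1, this⟩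
  have h2 := Finset.eq_of_subset_of_card_le h1 (by
    rw [card_north, hQ, Finset.card_image_of_injective _ h.1]; simp)
  have h3 : p ∈ Finset.univ.image lab := by
    rw [h2]
    exact Finset.mem_filter.2 ⟨Finset.mem_range.2 (List.getElem?_eq_some_iff.1 hp).1, hp⟩
  obtain ⟨i, _, hi⟩ := Finset.mem_image.1 h3
  exact ⟨i, hi⟩

theorem lab_mono {n : ℕ} {Q : List Step} {lab : Fin n → ℕ} (hQ : northCount Q = n) (h : IsLabelling n Q lab)
    (d : ℕ) : ∀ {i j : Fin n}, ee Q (lab i) = ee Q (lab j) → lab j = lab i + (d + 1) → i < j := by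
  induction d with
  | zero => intro i j _ hd; exact h.2.2 i j hd
  | succ d ih =>
    intro i j he hd
    have hj := (List.getElem?_eq_some_iff.1 (h.2.1 j)).1
    have := (ee_eq_iff (by omega) hj.le).1 he (lab i + (d + 1)) (by omega) (by omega)
    obtain ⟨k, hk⟩ := lab_surj hQ h this
    have m1 := ee_mono Q (show lab i ≤ lab k by omega)
    have m2 := ee_mono Q (show lab k ≤ lab j by omega)
    exact (ih (by omega) hk).trans (h.2.2 k j (by omega))

theorem lab_mono' {n : ℕ} {Q : List Step} {lab : Fin n → ℕ} (hQ : northCount Q = n) (h : IsLabelling n Q lab)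
    {i j : Fin n} (he : ee Q (lab i) = ee Q (lab j)) (hij : i < j) : lab i < lab j := by
  by_contra hc
  rcases Nat.lt_or_ge (lab j) (lab i) with h1 | h1
  · have := lab_mono hQ h (lab i - lab j - 1) he.symm (by omega)
    exact absurd hij (not_lt.2 this.le)
  · exact absurd (h.1 (show lab i = lab j by omega)) hij.ne

theorem lab_fiber {n : ℕ} {Q : List Step} {lab : Fin n → ℕ} (hQ : northCount Q = n) (h : IsLabelling n Q lab)
    (j : ℕ) : (Finset.univ.filter (fun i => ee Q (lab i) = j)).card = (TT Q j).card := by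
  apply Finset.card_bij (fun i _ => lab i)
  · intro i hi
    exact mem_TT.2 ⟨h.2.1 i, (Finset.mem_filter.1 hi).2⟩
  · intro i _ i' _ e; exact h.1 e
  · intro p hp
    obtain ⟨h1, h2⟩ := mem_TT.1 hp
    obtain ⟨i, rfl⟩ := lab_surj hQ h h1
    exact ⟨i, by simpa using h2, rfl⟩

theorem lab_unique {n : ℕ} {Q : List Step} {lab lab' : Fin n → ℕ} (hQ : northCount Q = n) (h : IsLabelling n Q lab)
    (h' : IsLabelling n Q lab') (he : ∀ i, ee Q (lab i) = ee Q (lab' i)) : lab = lab' := by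
  have key : ∀ j, (fun i : {i // ee Q (lab i) = j} => lab i) = (fun i : {i // ee Q (lab i) = j} => lab' i) := by
    intro j
    have s1 : StrictMono (fun i : {i // ee Q (lab i) = j} => lab i) := by
      intro a b hab
      exact lab_mono' hQ h (a.2.trans b.2.symm) hab
    have s2 : StrictMono (fun i : {i // ee Q (lab i) = j} => lab' i) := by
      intro a b hab
      exact lab_mono' hQ h' (by rw [← he, ← he, a.2, b.2]) hab
    refine (StrictMono.range_inj s1 s2).1 ?_
    ext p
    constructor
    · rintro ⟨i, rfl⟩
      obtain ⟨k, hk⟩ := lab_surj hQ h' (h.2.1 i.1)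
      exact ⟨⟨k, by rw [he, hk, i.2]⟩, hk⟩
    · rintro ⟨i, rfl⟩
      obtain ⟨k, hk⟩ := lab_surj hQ h (h'.2.1 i.1)
      exact ⟨⟨k, by rw [hk, ← he, i.2]⟩, hk⟩
  funext i
  exact congrFun (key _) ⟨i, rfl⟩

theorem lab_exists {n : ℕ} {Q : List Step} (g : Fin n → ℕ)
    (hg : ∀ j, (Finset.univ.filter (fun i => g i = j)).card = (TT Q j).card) :
    ∃ lab, IsLabelling n Q lab ∧ ∀ i, ee Q (lab i) = g i := by
  let Φ : ∀ j, (Finset.univ.filter (fun i => g i = j)) ≃o (TT Q j) := fun j =>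
    ((Finset.univ.filter (fun i => g i = j)).orderIsoOfFin (hg j)).symm.trans ((TT Q j).orderIsoOfFin rfl)
  let lab : Fin n → ℕ := fun i => Φ (g i) ⟨i, by simp⟩
  have hlab : ∀ i j (h : g i = j), lab i = Φ j ⟨i, by simp [h]⟩ := by
    intro i j h; subst h; rfl
  have hT : ∀ i, Q[lab i]? = some N ∧ ee Q (lab i) = g i := fun i => mem_TT.1 (Φ (g i) ⟨i, by simp⟩).2
  have hmono : ∀ i j, g i = g j → (lab i < lab j ↔ i < j) := by
    intro i j h
    rw [hlab i _ h, hlab j _ rfl]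
    rw [Subtype.coe_lt_coe, OrderIso.lt_iff_lt]
    rfl
  have hinj : Function.Injective lab := by
    intro i j h
    have hgg : g i = g j := by rw [← (hT i).2, ← (hT j).2, h]
    have h1 := hmono i j hgg
    have h2 := hmono j i hgg.symm
    rcases lt_trichotomy i j with h3 | h3 | h3
    · have := h1.2 h3; omega
    · exact h3
    · have := h2.2 h3; omega
  refine ⟨lab, ⟨hinj, fun i => (hT i).1, ?_⟩, fun i => (hT i).2⟩
  intro i j h
  refine (hmono i j ?_).1 (by omega)
  rw [← (hT i).2, ← (hT j).2, h, ee_succ_N (hT i).1]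

end lab
end TI

namespace TI
open Step

section cnt

theorem card_TT (Q : List Step) (j : ℕ) : (TT Q j).card =
    ∑ p ∈ Finset.range Q.length, if Q[p]? = some N ∧ ee Q p = j then 1 else 0 := by
  rw [TT, Finset.card_filter]

theorem card_TT_N_zero (w : List Step) : (TT (N :: w) 0).card = (TT w 0).card + 1 := by
  rw [card_TT, card_TT, List.length_cons, Finset.sum_range_succ']
  simp [ee, eastCount_N, eastCount_nil, -Finset.sum_boole]
  congr

theorem card_TT_N_succ (w : List Step) (j : ℕ) : (TT (N :: w) (j + 1)).card = (TT w (j + 1)).card := by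
  rw [card_TT, card_TT, List.length_cons, Finset.sum_range_succ']
  simp [ee, eastCount_N, eastCount_nil, -Finset.sum_boole]
  congr

theorem card_TT_E_zero (w : List Step) : (TT (E :: w) 0).card = 0 := by
  rw [card_TT, List.length_cons, Finset.sum_range_succ']
  simp [ee, eastCount_E, eastCount_nil, -Finset.sum_boole]

theorem card_TT_E_succ (w : List Step) (j : ℕ) : (TT (E :: w) (j + 1)).card = (TT w j).card := by
  rw [card_TT, card_TT, List.length_cons, Finset.sum_range_succ']
  simp [ee, eastCount_E, eastCount_nil, -Finset.sum_boole]
  congr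

theorem wts_eq {R : Type*} [CommRing R] (h : ℕ → R) (Q : List Step) : ∀ r, wts h r Q =
    h (r + (TT Q 0).card) * ∏ j ∈ Finset.range (eastCount Q), h (TT Q (j + 1)).card := by
  induction Q with
  | nil => intro r; simp [wts, eastCount_nil, TT]
  | cons s w ih =>
    intro r
    cases s with
    | N =>
      simp only [wts, ih, eastCount_N, card_TT_N_zero, card_TT_N_succ]
      congr 2; omega
    | E =>
      simp only [wts, ih, eastCount_E, card_TT_E_zero, card_TT_E_succ, zero_add, add_zero]
      congr 1
      rw [Finset.prod_range_succ', mul_comm]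

theorem wts_zero {R : Type*} [CommRing R] (h : ℕ → R) (Q : List Step) : wts h 0 Q =
    ∏ j : Fin (eastCount Q + 1), h (TT Q j).card := by
  rw [wts_eq, zero_add, Fin.prod_univ_eq_prod_range (fun j => h (TT Q j).card), Finset.prod_range_succ', mul_comm]

open Polynomial in
theorem h_eq {ι : Type*} [Fintype ι] [DecidableEq ι] (lam : ι → ℕ) (a : ℕ) :
    (∏ c, (1 + C (MvPolynomial.X c) * X ^ lam c) : (MvPolynomial ι ℚ)[X]).coeff a =
      ∑ S : Finset ι, if ∑ c ∈ S, lam c = a then ∏ c ∈ S, MvPolynomial.X c else 0 := by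
  rw [Finset.prod_one_add, Finset.powerset_univ, finsetSum_coeff]
  refine Finset.sum_congr rfl fun S _ => ?_
  rw [Finset.prod_mul_distrib, Finset.prod_pow_eq_pow_sum, ← map_prod, coeff_C_mul, coeff_X_pow]
  simp [eq_comm]

theorem prod_monomial {J ι : Type*} [Fintype J] [Fintype ι] [DecidableEq ι] (φ : J → Finset ι) :
    MvPolynomial.coeff (ones ι) (∏ j, ∏ c ∈ φ j, MvPolynomial.X c : MvPolynomial ι ℚ) =
      if ∀ c, (Finset.univ.filter (fun j => c ∈ φ j)).card = 1 then 1 else 0 := by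
  classical
  have : (∏ j, ∏ c ∈ φ j, MvPolynomial.X c : MvPolynomial ι ℚ) =
      MvPolynomial.monomial (∑ j, ∑ c ∈ φ j, Finsupp.single c 1) 1 := by
    simp only [prod_X_eq]
    rw [← MvPolynomial.monomial_sum_one]
  rw [this, MvPolynomial.coeff_monomial]
  congr 1
  rw [eq_iff_iff, DFunLike.ext_iff]
  refine forall_congr' fun c => ?_
  rw [ones_apply]
  simp [Finsupp.finsetSum_apply, Finsupp.single_apply, Finset.sum_ite_eq, Finset.card_filter, -Finset.sum_boole]

theorem coeff_wts {ι : Type*} [Fintype ι] [DecidableEq ι] (lam : ι → ℕ) (Q : List Step) :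
    MvPolynomial.coeff (ones ι)
      (wts (fun r => (∏ c, (1 + Polynomial.C (MvPolynomial.X c) * Polynomial.X ^ lam c) : Polynomial (MvPolynomial ι ℚ)).coeff r) 0 Q) =
    ((Finset.univ.filter (fun κ : ι → Fin (eastCount Q + 1) =>
      ∀ j, ∑ c ∈ Finset.univ.filter (fun c => κ c = j), lam c = (TT Q j).card)).card : ℚ) := by
  rw [wts_zero]
  simp only [h_eq]
  rw [Finset.prod_univ_sum, Fintype.piFinset_univ, MvPolynomial.coeff_sum]
  have : ∀ φ : Fin (eastCount Q + 1) → Finset ι, MvPolynomial.coeff (ones ι)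
      (∏ j, (if ∑ c ∈ φ j, lam c = (TT Q j).card then ∏ c ∈ φ j, MvPolynomial.X c else 0 : MvPolynomial ι ℚ)) =
      if (∀ j, ∑ c ∈ φ j, lam c = (TT Q j).card) ∧ ∀ c, (Finset.univ.filter (fun j => c ∈ φ j)).card = 1 then 1 else 0 := by
    intro φ
    by_cases h : ∀ j, ∑ c ∈ φ j, lam c = (TT Q j).card
    · simp only [h, if_true, prod_monomial, implies_true, true_and]
    · rw [if_neg (fun h' => h h'.1)]
      push Not at h
      obtain ⟨j, hj⟩ := h
      rw [Finset.prod_eq_zero (Finset.mem_univ j) (if_neg hj), MvPolynomial.coeff_zero]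
  simp only [this]
  rw [← Finset.sum_filter, Finset.sum_const, nsmul_eq_mul, mul_one]
  congr 1
  symm
  apply Finset.card_bij (fun κ _ j => Finset.univ.filter (fun c => κ c = j))
  · intro κ hκ
    simp only [Finset.mem_filter, Finset.mem_univ, true_and] at hκ ⊢
    refine ⟨hκ, fun c => ?_⟩
    rw [Finset.card_eq_one]
    exact ⟨κ c, by ext j; simp [eq_comm]⟩
  · intro κ _ κ' _ h
    funext c
    have := congrFun h (κ c)
    have h2 : c ∈ Finset.univ.filter (fun d => κ d = κ c) := by simp
    rw [this] at h2
    exact (Finset.mem_filter.1 h2).2.symm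
  · intro φ hφ
    simp only [Finset.mem_filter, Finset.mem_univ, true_and] at hφ
    obtain ⟨h1, h2⟩ := hφ
    simp only [Finset.card_eq_one] at h2
    choose κ hκ using h2
    have e : (fun j => Finset.univ.filter (fun c => κ c = j)) = φ := by
      funext j
      ext c
      have := Finset.ext_iff.1 (hκ c) j
      simp only [Finset.mem_filter, Finset.mem_univ, true_and, Finset.mem_singleton] at this ⊢
      rw [this, eq_comm]
    refine ⟨κ, ?_, e⟩
    simp only [Finset.mem_filter, Finset.mem_univ, true_and]
    intro j
    rw [← h1 j, ← e]

end cnt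
end TI

namespace TI
open Step

section fin

theorem card_labs {n : ℕ} (σ : Equiv.Perm (Fin n)) [Fintype (Cycles σ)] [DecidableEq (Cycles σ)] {Q : List Step} (hQ : northCount Q = n) :
    Nat.card {lab : Fin n → ℕ // IsLabelling n Q lab ∧ ∀ i j, σ.SameCycle i j → SameAscent Q (lab i) (lab j)} =
    (Finset.univ.filter (fun κ : Cycles σ → Fin (eastCount Q + 1) =>
      ∀ j, ∑ c ∈ Finset.univ.filter (fun c => κ c = j), cycleLen σ c = (TT Q j).card)).card := by
  classical
  let mk : Fin n → Cycles σ := Quotient.mk (Equiv.Perm.SameCycle.setoid σ)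
  have hmk : ∀ i j, mk i = mk j ↔ σ.SameCycle i j := fun i j => Quotient.eq
  have hsurj : ∀ c, ∃ i, mk i = c := fun c => Quotient.exists_rep c
  choose out hout using hsurj
  have hlen : ∀ c, cycleLen σ c = (Finset.univ.filter (fun i => mk i = c)).card := by
    intro c
    rw [cycleLen, Nat.card_eq_fintype_card, Fintype.card_subtype]
    congr
  have hsum : ∀ s : Finset (Cycles σ), ∑ c ∈ s, cycleLen σ c = (Finset.univ.filter (fun i => mk i ∈ s)).card := by
    intro s
    rw [Finset.card_eq_sum_card_fiberwise (f := mk) (t := s)]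
    · refine Finset.sum_congr rfl fun c hc => ?_
      rw [hlen]
      congr 1
      ext i
      simp only [Finset.mem_filter, Finset.mem_univ, true_and]
      constructor
      · intro h; exact ⟨h ▸ hc, h⟩
      · exact fun h => h.2
    · intro i hi
      simpa using hi
  rw [← Nat.card_eq_finsetCard]
  have hfix : ∀ lab, (IsLabelling n Q lab ∧ ∀ i j, σ.SameCycle i j → SameAscent Q (lab i) (lab j)) →
      ∀ i, ee Q (lab (out (mk i))) = ee Q (lab i) := by
    intro lab h i
    exact (sameAscent_iff (h.1.2.1 _) (h.1.2.1 _)).1 (h.2 _ _ ((hmk _ _).1 (hout _)))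
  refine Nat.card_eq_of_bijective (fun lab => ⟨fun c => ⟨ee Q (lab.1 (out c)), Nat.lt_succ_of_le (ee_le _ _)⟩, ?_⟩) ⟨?_, ?_⟩
  · simp only [Finset.mem_filter, Finset.mem_univ, true_and]
    intro j
    rw [hsum, ← lab_fiber hQ lab.2.1]
    congr 1
    ext i
    simp only [Finset.mem_filter, Finset.mem_univ, true_and, Fin.ext_iff]
    rw [hfix _ lab.2]
  · intro lab lab' h
    apply Subtype.ext
    apply lab_unique hQ lab.2.1 lab'.2.1
    intro i
    rw [← hfix _ lab.2, ← hfix _ lab'.2]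
    have := congrFun (congrArg Subtype.val h) (mk i)
    exact congrArg Fin.val this
  · rintro ⟨κ, hκ⟩
    simp only [Finset.mem_filter, Finset.mem_univ, true_and] at hκ
    obtain ⟨lab, h1, h2⟩ := lab_exists (n := n) (Q := Q) (fun i => (κ (mk i) : ℕ)) (by
      intro j
      by_cases hj : j < eastCount Q + 1
      · have := hκ ⟨j, hj⟩
        rw [hsum] at this
        rw [← this]
        congr 1
        ext i
        simp [Fin.ext_iff]
      · rw [Finset.card_eq_zero.2, Finset.card_eq_zero.2]
        · ext p
          simp only [mem_TT, Finset.notMem_empty, iff_false, not_and]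
          intro _ h
          have := ee_le Q p
          omega
        · ext i
          simp only [Finset.mem_filter, Finset.mem_univ, true_and, Finset.notMem_empty, iff_false]
          have := (κ (mk i)).2
          omega)
    refine ⟨⟨lab, h1, ?_⟩, ?_⟩
    · intro i j hij
      rw [sameAscent_iff (h1.2.1 _) (h1.2.1 _), h2, h2, (hmk i j).2 hij]
    · apply Subtype.ext
      funext c
      apply Fin.ext
      simp only [h2, hout]

theorem sum_cycleLen {n : ℕ} (σ : Equiv.Perm (Fin n)) [Fintype (Cycles σ)] : ∑ c, cycleLen σ c = n := by
  classical
  let mk : Fin n → Cycles σ := Quotient.mk (Equiv.Perm.SameCycle.setoid σ)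
  have := Finset.card_eq_sum_card_fiberwise (s := (Finset.univ : Finset (Fin n))) (f := mk)
    (t := (Finset.univ : Finset (Cycles σ))) (by intro i hi; simp)
  rw [Finset.card_univ, Fintype.card_fin] at this
  refine Eq.trans ?_ this.symm
  refine Finset.sum_congr rfl fun c _ => ?_
  rw [cycleLen, Nat.card_eq_fintype_card, Fintype.card_subtype]
  congr

end fin
end TI

/-- **(Bergeron–Préville-Ratelle conjecture; Bousquet-Mélou, Chapuy, Préville-Ratelle.)**
Fix `m ≥ 1`, `n ≥ 1` and a permutation `σ ∈ S_n` of cycle type `λ = (λ_1, …, λ_ℓ)`.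
The number of labelled `m`-Tamari intervals of size `n` fixed under the action of `σ`
equals `(mn+1)^{ℓ−2} ∏_{i=1}^{ℓ} binom((m+1)λ_i, λ_i)`, an identity in `ℚ`. -/
theorem card_fixed_labelled_tamari_intervals (m n : ℕ) (hm : 1 ≤ m) (hn : 1 ≤ n)
    (σ : Equiv.Perm (Fin n)) :
    (Nat.card {x : (List Step × List Step) × (Fin n → ℕ) //
        IsLabelledTamariInterval m n x ∧ FixedBy x σ} : ℚ)
      = (m * n + 1 : ℚ) ^ ((numCycles σ : ℤ) - 2)
        * ∏ᶠ c : Cycles σ,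
            (Nat.choose ((m + 1) * cycleLen σ c) (cycleLen σ c) : ℚ) := by
  classical
  have : Finite (Cycles σ) := inferInstanceAs (Finite (Quotient _))
  letI : Fintype (Cycles σ) := Fintype.ofFinite _
  have key := TI.final_alg hm (fun c : Cycles σ => cycleLen σ c)
  simp only [TI.coeff_wts] at key
  rw [TI.sum_cycleLen] at key
  have hrhs : (m * n + 1 : ℚ) ^ ((numCycles σ : ℤ) - 2)
        * ∏ᶠ c : Cycles σ, (Nat.choose ((m + 1) * cycleLen σ c) (cycleLen σ c) : ℚ) =
      (1 + m * (n : ℕ) : ℚ) ^ ((Fintype.card (Cycles σ) : ℤ) - 2) *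
        ∏ c, (((m + 1) * cycleLen σ c).choose (m * cycleLen σ c) : ℚ) := by
    rw [numCycles, Nat.card_eq_fintype_card, finprod_eq_prod_of_fintype, add_comm]
    congr 1
    refine Finset.prod_congr rfl fun c _ => ?_
    rw [← Nat.choose_symm_of_eq_add]
    ring
  rw [hrhs, ← key, ← Nat.cast_sum]
  congr 1
  have e1 : ∀ p ∈ TI.Iv m 0 n, (Finset.univ.filter (fun κ : Cycles σ → Fin (eastCount p.2 + 1) =>
      ∀ j, ∑ c ∈ Finset.univ.filter (fun c => κ c = j), cycleLen σ c = (TI.TT p.2 j).card)).card =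
      Nat.card {lab : Fin n → ℕ // IsLabelling n p.2 lab ∧ ∀ i j, σ.SameCycle i j → SameAscent p.2 (lab i) (lab j)} :=
    fun p hp => (TI.card_labs σ (TI.mem_Iv.1 hp).2.1).symm
  rw [Finset.sum_congr rfl e1]
  let B : {p // p ∈ TI.Iv m 0 n} → Type := fun p =>
    {lab : Fin n → ℕ // IsLabelling n p.1.2 lab ∧ ∀ i j, σ.SameCycle i j → SameAscent p.1.2 (lab i) (lab j)}
  have hfin : ∀ p, Finite (B p) := by
    intro p
    refine Finite.of_injective (fun lab : B p => (fun i => (⟨lab.1 i, ?_⟩ : Fin p.1.2.length))) ?_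
    · exact (List.getElem?_eq_some_iff.1 (lab.2.1.2.1 i)).1
    · intro a b h
      apply Subtype.ext
      funext i
      exact congrArg Fin.val (congrFun h i)
  rw [← Finset.sum_coe_sort, ← Nat.card_sigma (β := B)]
  refine Nat.card_congr ⟨fun x => ⟨⟨x.1.1, ?_⟩, ⟨x.1.2, ?_⟩⟩, fun y => ⟨(y.1.1, y.2.1), ?_⟩, fun _ => rfl, fun _ => rfl⟩
  · exact TI.mem_Iv.2 ⟨TI.isBallot_iff.1 x.2.1.2.2.1, x.2.1.2.2.2.1, x.2.1.2.2.2.2.1⟩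
  · exact ⟨x.2.1.2.2.2.2.2, x.2.2⟩
  · obtain ⟨h1, h2, h3⟩ := TI.mem_Iv.1 y.1.2
    exact ⟨⟨TI.isBallot_iff.2 (TI.le_run h3 h1), (TI.le_north h3).trans h2, TI.isBallot_iff.2 h1, h2, h3, y.2.2.1⟩, y.2.2.2⟩
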